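/- arXiv:2408.00472 — 3 statements merged into one kernel-verified Lean document; each statement's English description precedes it below -/
import Mathlib

section
/- Let u, u* be AB-entropy solutions of u_t + f(x,u)_x = 0 on ℝ × [0,T], let x ∈ ℝ, and let ζ ∈ C(u*, x). Then F_t(ζ, u) ≥ F_t(ζ, u*) for every t ∈ [0,T]. -/
open MeasureTheory Set Filter

noncomputable section

/-- The discontinuous flux `f(x,u) = f_l(u)` for `x < 0`, `f_r(u)` for `x > 0`
(the value at the interface is taken to be `f_r(u)`). -/
def dflux (fl fr : ℝ → ℝ) (x u : ℝ) : ℝ := if x < 0 then fl u else fr u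

/-- The connection function `c^{AB}`. -/
def cAB (A B : ℝ) (x : ℝ) : ℝ := if x ≤ 0 then A else B

/-- An `AB`-entropy solution of `u_t + f(x,u)_x = 0` on `ℝ × [0,∞)` with
initial datum `u0`, for the flux `f(x,·) = fl` on `x<0` and `fr` on `x>0`,
relative to the connection `(A,B)`.  The structure bundles the solution `u`
(as a function of `(x,t)`), its one-sided spatial limits `um x t = u(x-,t)` and
`up x t = u(x+,t)` (for `t > 0`), the weak (distributional) formulation, the
Kružkov entropy inequalities away from the interface, the `AB`-interface
entropy inequality, `L¹_loc`-continuity in time and the initial condition. -/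
structure ABSol (fl fr : ℝ → ℝ) (A B : ℝ) (u0 : ℝ → ℝ) where
  u : ℝ → ℝ → ℝ
  meas : Measurable (Function.uncurry u)
  bdd : ∃ M : ℝ, ∀ x t, |u x t| ≤ M
  um : ℝ → ℝ → ℝ
  up : ℝ → ℝ → ℝ
  um_spec : ∀ x t, 0 < t →
    Tendsto (fun y => u y t) (nhdsWithin x (Iio x)) (nhds (um x t))
  up_spec : ∀ x t, 0 < t →
    Tendsto (fun y => u y t) (nhdsWithin x (Ioi x)) (nhds (up x t))
  weak : ∀ φ : ℝ → ℝ → ℝ,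
    ContDiff ℝ 1 (fun p : ℝ × ℝ => φ p.1 p.2) →
    HasCompactSupport (fun p : ℝ × ℝ => φ p.1 p.2) →
    (∀ x t, t ≤ 0 → φ x t = 0) →
    (∫ p : ℝ × ℝ, (u p.1 p.2 * deriv (fun s => φ p.1 s) p.2 +
        dflux fl fr p.1 (u p.1 p.2) * deriv (fun y => φ y p.2) p.1)) = 0
  kruzkov_l : ∀ (k : ℝ) (φ : ℝ → ℝ → ℝ),
    ContDiff ℝ 1 (fun p : ℝ × ℝ => φ p.1 p.2) →
    HasCompactSupport (fun p : ℝ × ℝ => φ p.1 p.2) →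
    (∀ x t, 0 ≤ φ x t) →
    (∀ x t, 0 ≤ x ∨ t ≤ 0 → φ x t = 0) →
    0 ≤ ∫ p : ℝ × ℝ, (|u p.1 p.2 - k| * deriv (fun s => φ p.1 s) p.2 +
        Real.sign (u p.1 p.2 - k) * (fl (u p.1 p.2) - fl k) *
          deriv (fun y => φ y p.2) p.1)
  kruzkov_r : ∀ (k : ℝ) (φ : ℝ → ℝ → ℝ),
    ContDiff ℝ 1 (fun p : ℝ × ℝ => φ p.1 p.2) →
    HasCompactSupport (fun p : ℝ × ℝ => φ p.1 p.2) →
    (∀ x t, 0 ≤ φ x t) →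
    (∀ x t, x ≤ 0 ∨ t ≤ 0 → φ x t = 0) →
    0 ≤ ∫ p : ℝ × ℝ, (|u p.1 p.2 - k| * deriv (fun s => φ p.1 s) p.2 +
        Real.sign (u p.1 p.2 - k) * (fr (u p.1 p.2) - fr k) *
          deriv (fun y => φ y p.2) p.1)
  interfaceEntropy : ∀ φ : ℝ → ℝ → ℝ,
    ContDiff ℝ 1 (fun p : ℝ × ℝ => φ p.1 p.2) →
    HasCompactSupport (fun p : ℝ × ℝ => φ p.1 p.2) →
    (∀ x t, 0 ≤ φ x t) →
    (∀ x t, t ≤ 0 → φ x t = 0) →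
    0 ≤ ∫ p : ℝ × ℝ, (|u p.1 p.2 - cAB A B p.1| * deriv (fun s => φ p.1 s) p.2 +
        Real.sign (u p.1 p.2 - cAB A B p.1) *
          (dflux fl fr p.1 (u p.1 p.2) - dflux fl fr p.1 (cAB A B p.1)) *
          deriv (fun y => φ y p.2) p.1)
  timeCont : ∀ (r t₀ : ℝ), 0 ≤ t₀ →
    Tendsto (fun t => ∫ x in Icc (-r) r, |u x t - u x t₀|)
      (nhdsWithin t₀ (Ici 0)) (nhds 0)
  init : ∀ᵐ x : ℝ ∂volume, u x 0 = u0 x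

/-- `AB`-genuine/interface characteristic for the `AB`-entropy solution `sol`,
on the time interval `[0,T]`, where `γ = f_l(A) = f_r(B)`. -/
def IsABgic (T : ℝ) (fl fr : ℝ → ℝ) (γ : ℝ) {A B : ℝ} {u0 : ℝ → ℝ}
    (sol : ABSol fl fr A B u0) (ζ : ℝ → ℝ) : Prop :=
  (∃ K : NNReal, LipschitzOnWith K ζ (Icc 0 T)) ∧
  (∀ᵐ t ∂(volume.restrict (Icc 0 T)),
    (ζ t < 0 → HasDerivAt ζ (deriv fl (sol.um (ζ t) t)) t ∧
      deriv fl (sol.um (ζ t) t) = deriv fl (sol.up (ζ t) t)) ∧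
    (0 < ζ t → HasDerivAt ζ (deriv fr (sol.um (ζ t) t)) t ∧
      deriv fr (sol.um (ζ t) t) = deriv fr (sol.up (ζ t) t)) ∧
    (ζ t = 0 → fl (sol.um 0 t) = γ ∧ fr (sol.up 0 t) = γ))

/-- `C(u,x)`: the set of `AB`-genuine/interface characteristics of `sol`
reaching `x` at time `T`. -/
def charSet (T : ℝ) (fl fr : ℝ → ℝ) (γ : ℝ) {A B : ℝ} {u0 : ℝ → ℝ}
    (sol : ABSol fl fr A B u0) (x : ℝ) : Set (ℝ → ℝ) :=
  {ζ | IsABgic T fl fr γ sol ζ ∧ ζ T = x}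

/-- `C₀(u,x)`: the set of initial positions `ζ(0)` of characteristics in `C(u,x)`. -/
def charSet0 (T : ℝ) (fl fr : ℝ → ℝ) (γ : ℝ) {A B : ℝ} {u0 : ℝ → ℝ}
    (sol : ABSol fl fr A B u0) (x : ℝ) : Set ℝ :=
  (fun ζ : ℝ → ℝ => ζ 0) '' charSet T fl fr γ sol x

/-- Membership in `L^∞(ℝ)`: measurable and (essentially) bounded. -/
def IsLinf (g : ℝ → ℝ) : Prop :=
  Measurable g ∧ ∃ M : ℝ, ∀ᵐ x : ℝ ∂volume, |g x| ≤ M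

/-- `ω ∈ A^{[AB]}(T)`: the profile `ω` is attainable at time `T`. -/
def Attainable (T : ℝ) (fl fr : ℝ → ℝ) (A B : ℝ) (ω : ℝ → ℝ) : Prop :=
  ∃ u0 : ℝ → ℝ, IsLinf u0 ∧
    ∃ sol : ABSol fl fr A B u0, ∀ᵐ x : ℝ ∂volume, sol.u x T = ω x

/-- `I_T^{[AB]}(ω)`: the set of (bounded) initial data whose `AB`-entropy
solution coincides a.e. with `ω` at time `T`. -/
def InitialSet (T : ℝ) (fl fr : ℝ → ℝ) (A B : ℝ) (ω : ℝ → ℝ) : Set (ℝ → ℝ) :=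
  {u0 | IsLinf u0 ∧
    ∃ sol : ABSol fl fr A B u0, ∀ᵐ x : ℝ ∂volume, sol.u x T = ω x}

/-- `x` is a point of continuity of `ω`: the one-sided limits exist and coincide. -/
def ContinuityPt (ω : ℝ → ℝ) (x : ℝ) : Prop :=
  ∃ l : ℝ, Tendsto ω (nhdsWithin x (Iio x)) (nhds l) ∧
    Tendsto ω (nhdsWithin x (Ioi x)) (nhds l)

/-- `F_t(α−, sol)`: the total flux of the field `(f(x,u), u)` through the curve
`s ↦ (α(s), s)`, `s ∈ [t,T]`, computed with the left traces of `sol`. -/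
def Fminus (fl fr : ℝ → ℝ) (T : ℝ) {A B : ℝ} {u0 : ℝ → ℝ}
    (sol : ABSol fl fr A B u0) (t : ℝ) (α : ℝ → ℝ) : ℝ :=
  ∫ s in t..T,
    ((if α s ≤ 0 then fl (sol.um (α s) s) else fr (sol.um (α s) s)) -
      deriv α s * sol.um (α s) s)

/-- `F_t(α+, sol)`: the total flux of the field `(f(x,u), u)` through the curve
`s ↦ (α(s), s)`, `s ∈ [t,T]`, computed with the right traces of `sol`. -/
def Fplus (fl fr : ℝ → ℝ) (T : ℝ) {A B : ℝ} {u0 : ℝ → ℝ}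
    (sol : ABSol fl fr A B u0) (t : ℝ) (α : ℝ → ℝ) : ℝ :=
  ∫ s in t..T,
    ((if α s < 0 then fl (sol.up (α s) s) else fr (sol.up (α s) s)) -
      deriv α s * sol.up (α s) s)


lemma aux_trace_limit {P G : ℝ → ℝ → ℝ} {Gl Gr η ψ : ℝ → ℝ} {C : ℝ}
    (hP : Measurable (Function.uncurry P)) (hG : Measurable (Function.uncurry G))
    (hPb : ∀ x t, |P x t| ≤ C) (hGb : ∀ x t, |G x t| ≤ C)
    (hGl : ∀ t, 0 < t → Tendsto (fun y => G y t) (nhdsWithin 0 (Iio 0)) (nhds (Gl t)))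
    (hGr : ∀ t, 0 < t → Tendsto (fun y => G y t) (nhdsWithin 0 (Ioi 0)) (nhds (Gr t)))
    (hη : ContDiff ℝ 1 η) (hηc : HasCompactSupport η) (hη0 : η 0 = 1)
    (hψ : ContDiff ℝ 1 ψ) (hψc : HasCompactSupport ψ) (hψ0 : tsupport ψ ⊆ Ioi 0) :
    Tendsto (fun n : ℕ => ∫ p : ℝ × ℝ, (P p.1 p.2 * (η (((n:ℝ)+1) * p.1) * deriv ψ p.2) +
      G p.1 p.2 * ((((n:ℝ)+1) * deriv η (((n:ℝ)+1) * p.1)) * ψ p.2))) atTop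
      (nhds (∫ t, ψ t * (Gl t - Gr t))) := by
  have hC : 0 ≤ C := (abs_nonneg _).trans (hPb 0 0)
  have iη : Integrable η := hη.continuous.integrable_of_hasCompactSupport hηc
  have iη' : Integrable (deriv η) :=
    (hη.continuous_deriv le_rfl).integrable_of_hasCompactSupport hηc.deriv
  have iψ : Integrable ψ := hψ.continuous.integrable_of_hasCompactSupport hψc
  have iψ' : Integrable (deriv ψ) :=
    (hψ.continuous_deriv le_rfl).integrable_of_hasCompactSupport hψc.deriv
  set F : ℕ → ℝ × ℝ → ℝ := fun n p => (P p.1 p.2 * (η (((n:ℝ)+1) * p.1) * deriv ψ p.2) +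
      G p.1 p.2 * ((((n:ℝ)+1) * deriv η (((n:ℝ)+1) * p.1)) * ψ p.2)) with hF
  have iF : ∀ n, Integrable (F n) (volume.prod volume) := by
    intro n
    have hn : ((n:ℝ)+1) ≠ 0 := by positivity
    refine Integrable.add ?_ ?_
    · refine Integrable.bdd_mul (c := C) ?_ hP.aestronglyMeasurable
        (Eventually.of_forall fun p => hPb _ _)
      exact (iη.comp_mul_left' hn).mul_prod iψ'
    · refine Integrable.bdd_mul (c := C) ?_ hG.aestronglyMeasurable
        (Eventually.of_forall fun p => hGb _ _)
      exact ((iη'.comp_mul_left' hn).const_mul _).mul_prod iψ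
  set J : ℕ → ℝ → ℝ → ℝ := fun n t y =>
    P (((n:ℝ)+1)⁻¹ * y) t * (((n:ℝ)+1)⁻¹ * η y * deriv ψ t) +
      G (((n:ℝ)+1)⁻¹ * y) t * (deriv η y * ψ t) with hJ
  have hFJ : ∀ n t, ∫ x, F n (x, t) = ∫ y, J n t y := by
    intro n t
    have hn : (0:ℝ) < ((n:ℝ)+1) := by positivity
    have h1 := Measure.integral_comp_mul_left (fun x => F n (x, t)) (((n:ℝ)+1)⁻¹)
    have h2 : ∀ y, J n t y = ((n:ℝ)+1)⁻¹ * F n (((n:ℝ)+1)⁻¹ * y, t) := by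
      intro y
      simp only [hJ, hF]
      rw [mul_inv_cancel_left₀ hn.ne']
      field_simp
    simp_rw [h2]
    rw [integral_const_mul, h1, inv_inv, abs_of_pos hn, smul_eq_mul,
      inv_mul_cancel_left₀ hn.ne']
  have hJb : ∀ n t y, ‖J n t y‖ ≤ C * (|η y| + |deriv η y|) * (|ψ t| + |deriv ψ t|) := by
    intro n t y
    have hn : (0:ℝ) < ((n:ℝ)+1) := by positivity
    have hn1 : ((n:ℝ)+1)⁻¹ ≤ 1 := inv_le_one_of_one_le₀ (by linarith [n.cast_nonneg (α := ℝ)])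
    have e1 : |P (((n:ℝ)+1)⁻¹ * y) t * (((n:ℝ)+1)⁻¹ * η y * deriv ψ t)| ≤
        C * (|η y| * |deriv ψ t|) := by
      rw [abs_mul, abs_mul, abs_mul, abs_of_pos (inv_pos.2 hn)]
      refine mul_le_mul (hPb _ _) ?_ (by positivity) hC
      refine mul_le_mul_of_nonneg_right ?_ (abs_nonneg _)
      exact mul_le_of_le_one_left (abs_nonneg _) hn1
    have e2 : |G (((n:ℝ)+1)⁻¹ * y) t * (deriv η y * ψ t)| ≤
        C * (|deriv η y| * |ψ t|) := by
      rw [abs_mul, abs_mul]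
      exact mul_le_mul_of_nonneg_right (hGb _ _) (by positivity)
    refine (norm_add_le _ _).trans ?_
    refine (add_le_add e1 e2).trans ?_
    have : 0 ≤ C * (|η y| * |ψ t|) + C * (|deriv η y| * |deriv ψ t|) := by positivity
    nlinarith
  have ib : ∀ t, Integrable (fun y => C * (|η y| + |deriv η y|) * (|ψ t| + |deriv ψ t|)) :=
    fun t => ((iη.abs.add iη'.abs).const_mul C).mul_const _
  have hmain : Tendsto (fun n => ∫ t, ∫ x, F n (x, t)) atTop
      (nhds (∫ t, ψ t * (Gl t - Gr t))) := by
    refine tendsto_integral_of_dominated_convergence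
      (fun t => (∫ y, C * (|η y| + |deriv η y|)) * (|ψ t| + |deriv ψ t|)) ?_ ?_ ?_ ?_
    · exact fun n => (iF n).integral_prod_right.aestronglyMeasurable
    · exact (iψ.abs.add iψ'.abs).const_mul _
    · intro n
      refine Eventually.of_forall fun t => ?_
      rw [hFJ, ← integral_mul_const]
      exact norm_integral_le_of_norm_le (ib t) (Eventually.of_forall fun y => hJb n t y)
    · refine Eventually.of_forall fun t => ?_
      simp_rw [hFJ]
      by_cases ht : 0 < t
      · have hlim : ∫ y, (if y ≤ 0 then Gl t else Gr t) * (deriv η y * ψ t)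
            = ψ t * (Gl t - Gr t) := by
          have hint : Integrable (fun y => (if y ≤ 0 then Gl t else Gr t) * (deriv η y * ψ t)) := by
            refine Integrable.bdd_mul (c := |Gl t| + |Gr t|) (iη'.mul_const _) ?_ ?_
            · exact (Measurable.ite measurableSet_Iic measurable_const
                measurable_const).aestronglyMeasurable
            · refine Eventually.of_forall fun y => ?_
              rw [Real.norm_eq_abs]
              split_ifs
              · linarith [abs_nonneg (Gr t)]
              · linarith [abs_nonneg (Gl t)]
          rw [← integral_add_compl (measurableSet_Iic (a := (0:ℝ))) hint, compl_Iic]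
          have a1 : ∫ y in Iic (0:ℝ), (if y ≤ 0 then Gl t else Gr t) * (deriv η y * ψ t)
              = Gl t * ψ t := by
            rw [setIntegral_congr_fun (g := fun y => Gl t * (deriv η y * ψ t)) measurableSet_Iic]
            · rw [integral_const_mul, integral_mul_const,
                HasCompactSupport.integral_Iic_deriv_eq hη hηc, hη0, one_mul]
            · intro y hy
              simp only [mem_Iic] at hy
              simp [hy]
          have a2 : ∫ y in Ioi (0:ℝ), (if y ≤ 0 then Gl t else Gr t) * (deriv η y * ψ t)
              = - (Gr t * ψ t) := by
            rw [setIntegral_congr_fun (g := fun y => Gr t * (deriv η y * ψ t)) measurableSet_Ioi]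
            · rw [integral_const_mul, integral_mul_const,
                HasCompactSupport.integral_Ioi_deriv_eq hη hηc, hη0]
              ring
            · intro y hy
              simp only [mem_Ioi] at hy
              simp [not_le.2 hy]
          rw [a1, a2]; ring
        rw [← hlim]
        have hinv : Tendsto (fun n : ℕ => ((n:ℝ)+1)⁻¹) atTop (nhds 0) := by
          simpa using tendsto_one_div_add_atTop_nhds_zero_nat (𝕜 := ℝ)
        refine tendsto_integral_of_dominated_convergence _ ?_ (ib t)
          (fun n => Eventually.of_forall fun y => hJb n t y) ?_
        · intro n
          have m1 : Measurable (fun y => P (((n:ℝ)+1)⁻¹ * y) t) :=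
            hP.comp ((measurable_const.mul measurable_id).prodMk measurable_const)
          have m2 : Measurable (fun y => G (((n:ℝ)+1)⁻¹ * y) t) :=
            hG.comp ((measurable_const.mul measurable_id).prodMk measurable_const)
          have m3 : Measurable η := hη.continuous.measurable
          have m4 : Measurable (deriv η) := measurable_deriv η
          exact ((m1.mul ((m3.const_mul _).mul_const _)).add
            (m2.mul (m4.mul_const _))).aestronglyMeasurable
        · have hne : ∀ᵐ y : ℝ, y ≠ 0 := by simp [ae_iff]
          filter_upwards [hne] with y hy
          have l1 : Tendsto (fun n : ℕ => P (((n:ℝ)+1)⁻¹ * y) t *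
              (((n:ℝ)+1)⁻¹ * η y * deriv ψ t)) atTop (nhds 0) := by
            refine squeeze_zero_norm (a := fun n : ℕ => C * (((n:ℝ)+1)⁻¹ * |η y| * |deriv ψ t|))
              ?_ ?_
            · intro n
              have hn : (0:ℝ) < ((n:ℝ)+1) := by positivity
              rw [Real.norm_eq_abs, abs_mul, abs_mul, abs_mul, abs_of_pos (inv_pos.2 hn)]
              exact mul_le_mul_of_nonneg_right (hPb _ _) (by positivity)
            · have := ((hinv.mul_const (|η y|)).mul_const (|deriv ψ t|)).const_mul C
              simpa using this
          have l2 : Tendsto (fun n : ℕ => G (((n:ℝ)+1)⁻¹ * y) t) atTop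
              (nhds (if y ≤ 0 then Gl t else Gr t)) := by
            have h0 : Tendsto (fun n : ℕ => ((n:ℝ)+1)⁻¹ * y) atTop (nhds 0) := by
              simpa using hinv.mul_const y
            rcases lt_or_gt_of_ne hy with h | h
            · rw [if_pos h.le]
              refine (hGl t ht).comp (tendsto_nhdsWithin_iff.2 ⟨h0, Eventually.of_forall ?_⟩)
              intro n
              exact mul_neg_of_pos_of_neg (by positivity) h
            · rw [if_neg (not_le.2 h)]
              refine (hGr t ht).comp (tendsto_nhdsWithin_iff.2 ⟨h0, Eventually.of_forall ?_⟩)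
              intro n
              exact mul_pos (by positivity) h
          simpa using l1.add (l2.mul_const (deriv η y * ψ t))
      · have h0 : ψ t = 0 := image_eq_zero_of_notMem_tsupport fun h => ht (hψ0 h)
        have h1 : deriv ψ t = 0 :=
          image_eq_zero_of_notMem_tsupport fun h => ht (hψ0 (tsupport_deriv_subset h))
        simp [hJ, h0, h1]
  refine hmain.congr fun n => ?_
  exact (integral_prod_symm (F n) (iF n)).symm

lemma aux_ae_nonneg {D : ℝ → ℝ} (hD : LocallyIntegrable D)
    (h : ∀ ψ : ℝ → ℝ, ContDiff ℝ 1 ψ → HasCompactSupport ψ → (∀ t, 0 ≤ ψ t) →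
      tsupport ψ ⊆ Ioi 0 → 0 ≤ ∫ t, ψ t * D t) : ∀ᵐ t, 0 < t → 0 ≤ D t := by
  let b : ℕ → ContDiffBump (0:ℝ) := fun n =>
    ⟨((n:ℝ)+1)⁻¹ / 2, ((n:ℝ)+1)⁻¹, by positivity, by
      have : (0:ℝ) < ((n:ℝ)+1)⁻¹ := by positivity
      linarith⟩
  have hinv : Tendsto (fun n : ℕ => ((n:ℝ)+1)⁻¹) atTop (nhds 0) := by
    simpa using tendsto_one_div_add_atTop_nhds_zero_nat (𝕜 := ℝ)
  have hb : Tendsto (fun n => (b n).rOut) atTop (nhds 0) := hinv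
  have hb2 : ∀ᶠ n in atTop, (b n).rOut ≤ 2 * (b n).rIn :=
    Eventually.of_forall fun n => by
      change ((n:ℝ)+1)⁻¹ ≤ 2 * (((n:ℝ)+1)⁻¹ / 2)
      linarith
  filter_upwards [ContDiffBump.ae_convolution_tendsto_right_of_locallyIntegrable hb hb2 hD]
    with t ht ht0
  refine ge_of_tendsto ht ?_
  filter_upwards [hinv.eventually (gt_mem_nhds ht0)] with n hn
  rw [convolution_lsmul_swap]
  have hsub : tsupport (fun s => (b n).normed volume (t - s)) ⊆ Icc (t - ((n:ℝ)+1)⁻¹)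
      (t + ((n:ℝ)+1)⁻¹) := by
    refine closure_minimal ?_ isClosed_Icc
    intro s hs
    have : t - s ∈ Function.support ((b n).normed volume) := hs
    rw [ContDiffBump.support_normed_eq] at this
    rw [mem_ball_zero_iff, Real.norm_eq_abs, abs_lt] at this
    change - ((n:ℝ)+1)⁻¹ < _ ∧ _ < ((n:ℝ)+1)⁻¹ at this
    constructor <;> linarith [this.1, this.2]
  refine h (fun s => (b n).normed volume (t - s)) ?_ ?_ ?_ ?_
  · exact (b n).contDiff_normed.comp (contDiff_const.sub contDiff_id)
  · exact HasCompactSupport.of_support_subset_isCompact isCompact_Icc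
      ((subset_tsupport _).trans hsub)
  · exact fun s => (b n).nonneg_normed _
  · intro s hs
    have := (hsub hs).1
    simp only [mem_Ioi]
    linarith

lemma aux_trace_ineq {P G : ℝ → ℝ → ℝ} {Gl Gr : ℝ → ℝ} {C : ℝ}
    (hP : Measurable (Function.uncurry P)) (hG : Measurable (Function.uncurry G))
    (hPb : ∀ x t, |P x t| ≤ C) (hGb : ∀ x t, |G x t| ≤ C)
    (hGl : ∀ t, 0 < t → Tendsto (fun y => G y t) (nhdsWithin 0 (Iio 0)) (nhds (Gl t)))
    (hGr : ∀ t, 0 < t → Tendsto (fun y => G y t) (nhdsWithin 0 (Ioi 0)) (nhds (Gr t)))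
    (h : ∀ φ : ℝ → ℝ → ℝ,
      ContDiff ℝ 1 (fun p : ℝ × ℝ => φ p.1 p.2) →
      HasCompactSupport (fun p : ℝ × ℝ => φ p.1 p.2) →
      (∀ x t, 0 ≤ φ x t) → (∀ x t, t ≤ 0 → φ x t = 0) →
      0 ≤ ∫ p : ℝ × ℝ, (P p.1 p.2 * deriv (fun s => φ p.1 s) p.2 +
        G p.1 p.2 * deriv (fun y => φ y p.2) p.1)) :
    ∀ᵐ t, 0 < t → Gr t ≤ Gl t := by
  set D : ℝ → ℝ := fun t => if 0 < t then Gl t - Gr t else 0 with hDdef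
  have hinv : Tendsto (fun n : ℕ => ((n:ℝ)+1)⁻¹) atTop (nhds 0) := by
    simpa using tendsto_one_div_add_atTop_nhds_zero_nat (𝕜 := ℝ)
  have hDm : Measurable D := by
    refine measurable_of_tendsto_metrizable (f := fun n : ℕ => fun t =>
      if 0 < t then G (-((n:ℝ)+1)⁻¹) t - G (((n:ℝ)+1)⁻¹) t else 0) ?_ ?_
    · intro n
      have m : ∀ c : ℝ, Measurable (fun t => G c t) := fun c =>
        hG.comp (measurable_const.prodMk measurable_id)
      exact Measurable.ite measurableSet_Ioi ((m _).sub (m _)) measurable_const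
    · rw [tendsto_pi_nhds]
      intro t
      by_cases ht : 0 < t
      · simp only [hDdef, if_pos ht]
        refine Tendsto.sub ?_ ?_
        · refine (hGl t ht).comp (tendsto_nhdsWithin_iff.2 ⟨by simpa using hinv.neg,
            Eventually.of_forall fun n => ?_⟩)
          have : (0:ℝ) < ((n:ℝ)+1)⁻¹ := by positivity
          simp only [mem_Iio]; linarith
        · refine (hGr t ht).comp (tendsto_nhdsWithin_iff.2 ⟨hinv,
            Eventually.of_forall fun n => ?_⟩)
          have : (0:ℝ) < ((n:ℝ)+1)⁻¹ := by positivity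
          exact this
      · simp only [hDdef, if_neg ht]
        exact tendsto_const_nhds
  have hC : 0 ≤ C := (abs_nonneg _).trans (hPb 0 0)
  have hDb : ∀ t, |D t| ≤ C + C := by
    intro t
    by_cases ht : 0 < t
    · simp only [hDdef, if_pos ht]
      have b1 : |Gl t| ≤ C := le_of_tendsto (hGl t ht).abs (Eventually.of_forall fun y => hGb y t)
      have b2 : |Gr t| ≤ C := le_of_tendsto (hGr t ht).abs (Eventually.of_forall fun y => hGb y t)
      exact (abs_sub _ _).trans (add_le_add b1 b2)
    · simp only [hDdef, if_neg ht, abs_zero]; linarith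
  have hDl : LocallyIntegrable D := by
    refine (locallyIntegrable_const (C + C)).mono hDm.aestronglyMeasurable
      (Eventually.of_forall fun t => ?_)
    rw [Real.norm_eq_abs, Real.norm_eq_abs]
    exact (hDb t).trans (le_abs_self _)
  have key : ∀ᵐ t, 0 < t → 0 ≤ D t := by
    refine aux_ae_nonneg hDl fun ψ hψ hψc hψn hψs => ?_
    let b : ContDiffBump (0:ℝ) := ⟨1, 2, by norm_num, by norm_num⟩
    have hη : ContDiff ℝ 1 b := b.contDiff
    have hη0 : b 0 = 1 := b.one_of_mem_closedBall (by simp [b])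
    have hz : ∀ t, t ≤ 0 → ψ t = 0 := fun t ht =>
      image_eq_zero_of_notMem_tsupport fun h => absurd (hψs h) (not_lt.2 ht)
    have hlim := aux_trace_limit hP hG hPb hGb hGl hGr hη b.hasCompactSupport hη0 hψ hψc hψs
    have heq : ∫ t, ψ t * D t = ∫ t, ψ t * (Gl t - Gr t) := by
      congr 1
      ext t
      by_cases ht : 0 < t
      · simp [hDdef, ht]
      · simp [hz t (not_lt.1 ht)]
    rw [heq]
    refine ge_of_tendsto' hlim fun n => ?_
    have hn : (0:ℝ) < (n:ℝ) + 1 := by positivity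
    have := h (fun x t => b (((n:ℝ)+1) * x) * ψ t) ?_ ?_ ?_ ?_
    · refine this.trans_eq (integral_congr_ae (Eventually.of_forall fun p => ?_))
      have hd : DifferentiableAt ℝ b (((n:ℝ)+1) * p.1) :=
        (hη.differentiable one_ne_zero).differentiableAt
      have h1 : HasDerivAt (fun y => b (((n:ℝ)+1) * y))
          (deriv b (((n:ℝ)+1) * p.1) * (((n:ℝ)+1) * 1)) p.1 :=
        HasDerivAt.comp (h₂ := b) (h := fun y => ((n:ℝ)+1) * y) p.1 hd.hasDerivAt
          ((hasDerivAt_id p.1).const_mul _)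
      have h2 : deriv (fun s => b (((n:ℝ)+1) * p.1) * ψ s) p.2 =
          b (((n:ℝ)+1) * p.1) * deriv ψ p.2 := by simp
      simp only [h2, (h1.mul_const (ψ p.2)).deriv]
      ring
    · exact (hη.comp (contDiff_const.mul contDiff_fst)).mul (hψ.comp contDiff_snd)
    · refine HasCompactSupport.intro (K := (Icc (-2) 2) ×ˢ tsupport ψ)
        (isCompact_Icc.prod hψc) ?_
      rintro ⟨x, t⟩ hp
      simp only [mem_prod, not_and_or] at hp
      rcases hp with hp | hp
      · have : b (((n:ℝ)+1) * x) = 0 := by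
          apply b.zero_of_le_dist
          change 2 ≤ dist _ _
          rw [dist_zero_right, Real.norm_eq_abs, abs_mul, abs_of_pos hn]
          have h2 : 2 ≤ |x| := by
            by_contra hlt
            rw [not_le, abs_lt] at hlt
            exact hp ⟨hlt.1.le, hlt.2.le⟩
          have h3 : (1:ℝ) ≤ (n:ℝ) + 1 := by linarith [n.cast_nonneg (α := ℝ)]
          nlinarith
        simp [this]
      · simp [image_eq_zero_of_notMem_tsupport hp]
    · exact fun x t => mul_nonneg b.nonneg (hψn t)
    · intro x t ht
      simp [hz t ht]
  filter_upwards [key] with t ht ht0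
  have := ht ht0
  simp only [hDdef, if_pos ht0] at this
  linarith

lemma aux_sign (f : ℝ → ℝ) (v k : ℝ) :
    Real.sign (v - k) * (f v - f k) = f (max v k) - f (min v k) := by
  rcases lt_trichotomy v k with h | h | h
  · rw [Real.sign_of_neg (by linarith), max_eq_right h.le, min_eq_left h.le]; ring
  · simp [h]
  · rw [Real.sign_of_pos (by linarith), max_eq_left h.le, min_eq_right h.le]; ring

lemma aux_bound {fl fr : ℝ → ℝ} (hl : Continuous fl) (hr : Continuous fr) (M : ℝ) :
    ∃ C, ∀ x v, |v| ≤ M → |dflux fl fr x v| ≤ C := by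
  obtain ⟨C1, h1⟩ := (isCompact_Icc (a := -M) (b := M)).exists_bound_of_continuousOn hl.continuousOn
  obtain ⟨C2, h2⟩ := (isCompact_Icc (a := -M) (b := M)).exists_bound_of_continuousOn hr.continuousOn
  refine ⟨max C1 C2, fun x v hv => ?_⟩
  unfold dflux
  split_ifs
  · exact (h1 v (abs_le.1 hv)).trans (le_max_left _ _)
  · exact (h2 v (abs_le.1 hv)).trans (le_max_right _ _)

lemma aux_dflux_meas {fl fr : ℝ → ℝ} (hl : Continuous fl) (hr : Continuous fr)
    {g : ℝ × ℝ → ℝ} (hg : Measurable g) : Measurable (fun p : ℝ × ℝ => dflux fl fr p.1 (g p)) := by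
  unfold dflux
  exact Measurable.ite (measurable_fst measurableSet_Iio) (hl.measurable.comp hg)
    (hr.measurable.comp hg)

lemma aux_interface {A B : ℝ} {fl fr u0 : ℝ → ℝ}
    (hl : Continuous fl) (hr : Continuous fr)
    (hAB : fl A = fr B)
    (hAm : ∀ v, v ≤ A → fl A ≤ fl v) (hBm : ∀ v, B ≤ v → fr B ≤ fr v)
    (sol : ABSol fl fr A B u0) : ∀ᵐ t, 0 < t → fl A ≤ fr (sol.up 0 t) := by
  obtain ⟨M, hM⟩ := sol.bdd
  have hum : Measurable (fun p : ℝ × ℝ => sol.u p.1 p.2) := sol.meas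
  have hcm : Measurable (fun p : ℝ × ℝ => cAB A B p.1) := by
    unfold cAB
    exact Measurable.ite (measurable_fst measurableSet_Iic) measurable_const measurable_const
  have hM0 : 0 ≤ M := (abs_nonneg _).trans (hM 0 0)
  have hcb : ∀ x, |cAB A B x| ≤ |A| + |B| := by
    intro x
    unfold cAB
    split_ifs
    · linarith [abs_nonneg B]
    · linarith [abs_nonneg A]
  obtain ⟨C, hC⟩ := aux_bound hl hr (M + (|A| + |B|))
  have hAB0 : 0 ≤ |A| + |B| := by positivity
  have hC0 : 0 ≤ C := (abs_nonneg _).trans (hC 0 0 (by simp; positivity))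
  have wl : ∀ t, 0 < t → Tendsto (fun y => dflux fl fr y (sol.u y t)) (nhdsWithin 0 (Iio 0))
      (nhds (fl (sol.um 0 t))) := by
    intro t ht
    refine ((hl.tendsto _).comp (sol.um_spec 0 t ht)).congr' ?_
    filter_upwards [self_mem_nhdsWithin] with y hy
    simp only [mem_Iio] at hy
    simp [dflux, hy]
  have wr : ∀ t, 0 < t → Tendsto (fun y => dflux fl fr y (sol.u y t)) (nhdsWithin 0 (Ioi 0))
      (nhds (fr (sol.up 0 t))) := by
    intro t ht
    refine ((hr.tendsto _).comp (sol.up_spec 0 t ht)).congr' ?_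
    filter_upwards [self_mem_nhdsWithin] with y hy
    simp only [mem_Ioi] at hy
    simp [dflux, hy.le]
  have w1 : ∀ᵐ t, 0 < t → fr (sol.up 0 t) ≤ fl (sol.um 0 t) := by
    refine aux_trace_ineq (P := sol.u) (G := fun x t => dflux fl fr x (sol.u x t))
      (C := M + C) sol.meas (aux_dflux_meas hl hr hum) (fun x t => (hM x t).trans (by linarith))
      (fun x t => (hC x _ ((hM x t).trans (by linarith))).trans (by linarith)) wl wr ?_
    intro φ h1 h2 _ h4
    exact (sol.weak φ h1 h2 h4).ge
  have w3 : ∀ᵐ t, 0 < t → -fr (sol.up 0 t) ≤ -fl (sol.um 0 t) := by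
    refine aux_trace_ineq (P := fun x t => - sol.u x t)
      (G := fun x t => - dflux fl fr x (sol.u x t))
      (C := M + C) hum.neg (aux_dflux_meas hl hr hum).neg
      (fun x t => by rw [abs_neg]; exact (hM x t).trans (by linarith))
      (fun x t => by
        rw [abs_neg]; exact (hC x _ ((hM x t).trans (by linarith))).trans (by linarith))
      (fun t ht => (wl t ht).neg) (fun t ht => (wr t ht).neg) ?_
    intro φ h1 h2 _ h4
    have := sol.weak φ h1 h2 h4
    have e : ∀ p : ℝ × ℝ, (-sol.u p.1 p.2 * deriv (fun s => φ p.1 s) p.2 +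
        -dflux fl fr p.1 (sol.u p.1 p.2) * deriv (fun y => φ y p.2) p.1) =
        -(sol.u p.1 p.2 * deriv (fun s => φ p.1 s) p.2 +
        dflux fl fr p.1 (sol.u p.1 p.2) * deriv (fun y => φ y p.2) p.1) := fun p => by ring
    simp_rw [e]
    rw [integral_neg, this, neg_zero]
  have w4 : ∀ᵐ t, 0 < t → fr (max (sol.up 0 t) B) - fr (min (sol.up 0 t) B) ≤
      fl (max (sol.um 0 t) A) - fl (min (sol.um 0 t) A) := by
    have bmax : ∀ x t, |max (sol.u x t) (cAB A B x)| ≤ M + (|A| + |B|) := fun x t =>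
      abs_max_le_max_abs_abs.trans (max_le ((hM x t).trans (by linarith))
        ((hcb x).trans (by linarith)))
    have bmin : ∀ x t, |min (sol.u x t) (cAB A B x)| ≤ M + (|A| + |B|) := fun x t =>
      abs_min_le_max_abs_abs.trans (max_le ((hM x t).trans (by linarith))
        ((hcb x).trans (by linarith)))
    refine aux_trace_ineq (P := fun x t => |sol.u x t - cAB A B x|)
      (G := fun x t => dflux fl fr x (max (sol.u x t) (cAB A B x)) -
        dflux fl fr x (min (sol.u x t) (cAB A B x)))
      (C := (M + (|A| + |B|)) + (C + C)) ?_ ?_ ?_ ?_ ?_ ?_ ?_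
    · exact continuous_abs.measurable.comp (hum.sub hcm)
    · exact (aux_dflux_meas hl hr (hum.max hcm)).sub (aux_dflux_meas hl hr (hum.min hcm))
    · intro x t
      rw [abs_abs]
      exact (abs_sub _ _).trans (by linarith [hM x t, hcb x])
    · intro x t
      exact (abs_sub _ _).trans (by linarith [hC x _ (bmax x t), hC x _ (bmin x t)])
    · intro t ht
      have hc : Continuous fun v => fl (max v A) - fl (min v A) := by fun_prop
      refine ((hc.tendsto _).comp (sol.um_spec 0 t ht)).congr' ?_
      filter_upwards [self_mem_nhdsWithin] with y hy
      simp only [mem_Iio] at hy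
      simp [dflux, cAB, hy, hy.le]
    · intro t ht
      have hc : Continuous fun v => fr (max v B) - fr (min v B) := by fun_prop
      refine ((hc.tendsto _).comp (sol.up_spec 0 t ht)).congr' ?_
      filter_upwards [self_mem_nhdsWithin] with y hy
      simp only [mem_Ioi] at hy
      simp [dflux, cAB, hy.not_ge, hy.not_gt]
    · intro φ h1 h2 h3 h4
      have := sol.interfaceEntropy φ h1 h2 h3 h4
      simpa only [aux_sign] using this
  filter_upwards [w1, w3, w4] with t a1 a3 a4 ht
  specialize a1 ht; specialize a3 ht; specialize a4 ht
  by_contra hlt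
  rw [not_le] at hlt
  have hA : A < sol.um 0 t := by
    by_contra hle
    have := hAm _ (not_lt.1 hle)
    linarith
  have hB : sol.up 0 t < B := by
    by_contra hle
    have := hBm _ (not_lt.1 hle)
    linarith
  rw [max_eq_right hB.le, min_eq_left hB.le, max_eq_left hA.le, min_eq_right hA.le] at a4
  linarith

lemma aux_tangent {f : ℝ → ℝ} {a : ℝ} (hf : ContDiff ℝ 2 f) (ha : 0 < a)
    (h2 : ∀ w, a ≤ deriv (deriv f) w) (v w : ℝ) : f w + deriv f w * (v - w) ≤ f v := by
  have hm : StrictMono (deriv f) := strictMono_of_deriv_pos fun x => ha.trans_le (h2 x)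
  have hd : Differentiable ℝ f := hf.differentiable two_ne_zero
  rcases lt_trichotomy v w with h | h | h
  · obtain ⟨c, hc, e⟩ := exists_deriv_eq_slope f h hf.continuous.continuousOn hd.differentiableOn
    have := hm hc.2
    rw [e, div_lt_iff₀ (by linarith)] at this
    linarith
  · simp [h]
  · obtain ⟨c, hc, e⟩ := exists_deriv_eq_slope f h hf.continuous.continuousOn hd.differentiableOn
    have := hm hc.1
    rw [e, lt_div_iff₀ (by linarith)] at this
    linarith

lemma aux_deriv_zero (ζ : ℝ → ℝ) : ∀ᵐ s, ζ s = 0 → deriv ζ s = 0 := by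
  have hc : ({s ∈ {s | ζ s = 0} | nhdsWithin s ({s | ζ s = 0} ∩ Ioi s) = ⊥}).Countable :=
    countable_setOfPred_isolated_right_within
  filter_upwards [hc.ae_notMem volume] with s hs h0
  by_cases hd : DifferentiableAt ℝ ζ s
  · have hne : (nhdsWithin s ({s | ζ s = 0} ∩ Ioi s)).NeBot := ⟨fun h => hs ⟨h0, h⟩⟩
    have ht := hd.hasDerivAt.tendsto_slope
    have ht2 : Tendsto (slope ζ s) (nhdsWithin s ({s | ζ s = 0} ∩ Ioi s)) (nhds (deriv ζ s)) :=
      ht.mono_left (nhdsWithin_mono _ fun y hy => ne_of_gt hy.2)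
    have ht3 : Tendsto (slope ζ s) (nhdsWithin s ({s | ζ s = 0} ∩ Ioi s)) (nhds 0) := by
      refine tendsto_const_nhds.congr' ?_
      filter_upwards [self_mem_nhdsWithin] with y hy
      have : ζ y = 0 := hy.1
      simp [slope, this, h0]
    exact tendsto_nhds_unique ht2 ht3
  · exact deriv_zero_of_not_differentiableAt hd

lemma aux_integrable {T A B : ℝ} {fl fr u0 : ℝ → ℝ} {K : NNReal}
    (hl : Continuous fl) (hr : Continuous fr)
    (sol : ABSol fl fr A B u0) {ζ : ℝ → ℝ} (hζ : LipschitzOnWith K ζ (Icc 0 T))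
    {t : ℝ} (ht : t ∈ Icc (0:ℝ) T) :
    IntervalIntegrable (fun s =>
      ((if ζ s < 0 then fl (sol.up (ζ s) s) else fr (sol.up (ζ s) s)) -
      deriv ζ s * sol.up (ζ s) s)) volume t T := by
  rw [intervalIntegrable_iff_integrableOn_Ioo_of_le ht.2]
  have hsub : Ioo t T ⊆ Icc 0 T := fun s hs => ⟨ht.1.trans hs.1.le, hs.2.le⟩
  have hζm : AEMeasurable ζ (volume.restrict (Ioo t T)) :=
    (hζ.continuousOn.mono hsub).aemeasurable measurableSet_Ioo
  have hmem : ∀ᵐ s ∂(volume.restrict (Ioo t T)), s ∈ Ioo t T := ae_restrict_mem measurableSet_Ioo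
  obtain ⟨M, hM⟩ := sol.bdd
  have hinv : Tendsto (fun n : ℕ => ((n:ℝ)+1)⁻¹) atTop (nhds 0) := by
    simpa using tendsto_one_div_add_atTop_nhds_zero_nat (𝕜 := ℝ)
  have hup : AEMeasurable (fun s => sol.up (ζ s) s) (volume.restrict (Ioo t T)) := by
    refine aemeasurable_of_tendsto_metrizable_ae (f := fun n : ℕ => fun s =>
      sol.u (ζ s + ((n:ℝ)+1)⁻¹) s) atTop ?_ ?_
    · intro n
      exact sol.meas.comp_aemeasurable ((hζm.add_const _).prodMk aemeasurable_id)
    · filter_upwards [hmem] with s hs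
      refine (sol.up_spec (ζ s) s (ht.1.trans_lt hs.1)).comp (tendsto_nhdsWithin_iff.2
        ⟨by simpa using hinv.const_add (ζ s), Eventually.of_forall fun n => ?_⟩)
      have : (0:ℝ) < ((n:ℝ)+1)⁻¹ := by positivity
      simp only [mem_Ioi]; linarith
  have hupb : ∀ s ∈ Ioo t T, |sol.up (ζ s) s| ≤ M := fun s hs =>
    le_of_tendsto (sol.up_spec (ζ s) s (ht.1.trans_lt hs.1)).abs
      (Eventually.of_forall fun y => hM y s)
  obtain ⟨C, hC⟩ := aux_bound hl hr M
  refine Integrable.of_bound (μ := volume.restrict (Ioo t T)) ?_ (C + K * M) ?_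
  · refine AEMeasurable.aestronglyMeasurable ?_
    refine AEMeasurable.sub ?_ ((measurable_deriv ζ).aemeasurable.mul hup)
    have h2 : AEMeasurable (fun s => (ζ s, sol.up (ζ s) s)) (volume.restrict (Ioo t T)) :=
      hζm.prodMk hup
    exact (aux_dflux_meas hl hr measurable_snd).comp_aemeasurable h2
  · filter_upwards [hmem] with s hs
    have e1 : |dflux fl fr (ζ s) (sol.up (ζ s) s)| ≤ C := hC _ _ (hupb s hs)
    have e2 : |deriv ζ s| ≤ K := norm_deriv_le_of_lipschitzOn
      (Icc_mem_nhds (ht.1.trans_lt hs.1) hs.2) hζ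
    have e3 : |deriv ζ s * sol.up (ζ s) s| ≤ K * M := by
      rw [abs_mul]
      exact mul_le_mul e2 (hupb s hs) (abs_nonneg _) K.2
    exact (abs_sub _ _).trans (add_le_add e1 e3)

/-- along any AB-genuine/interface characteristic `ζ` of `u^*`,
the flux functional of any other AB-entropy solution `u` dominates that of
`u^*` (first part of Lemma 4.8 of the paper). -/
theorem flux_functional_inequality
    {T a θl θr A B : ℝ} {fl fr : ℝ → ℝ}
    (hT : 0 < T)
    (hflC : ContDiff ℝ 2 fl) (hfrC : ContDiff ℝ 2 fr)
    (ha : 0 < a)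
    (hfl2 : ∀ w : ℝ, a ≤ deriv (deriv fl) w)
    (hfr2 : ∀ w : ℝ, a ≤ deriv (deriv fr) w)
    (hf0 : fl 0 = fr 0) (hf1 : fl 1 = fr 1)
    (hθl : deriv fl θl = 0) (hθr : deriv fr θr = 0)
    (hθl0 : 0 ≤ θl) (hθr1 : θr ≤ 1)
    (hAB : fl A = fr B) (hA' : deriv fl A ≤ 0) (hB' : 0 ≤ deriv fr B)
    {ua0 ub0 : ℝ → ℝ} (hua0 : IsLinf ua0) (hub0 : IsLinf ub0)
    (usol : ABSol fl fr A B ua0) (ustar : ABSol fl fr A B ub0)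
    (x : ℝ) (ζ : ℝ → ℝ) (hζ : ζ ∈ charSet T fl fr (fl A) ustar x) :
    ∀ t ∈ Icc (0:ℝ) T,
      Fplus fl fr T ustar t ζ ≤ Fplus fl fr T usol t ζ := by
  intro t ht
  obtain ⟨⟨⟨K, hK⟩, hchar⟩, -⟩ := hζ
  have hl : Continuous fl := hflC.continuous
  have hr : Continuous fr := hfrC.continuous
  have hml : StrictMono (deriv fl) := strictMono_of_deriv_pos fun x => ha.trans_le (hfl2 x)
  have hmr : StrictMono (deriv fr) := strictMono_of_deriv_pos fun x => ha.trans_le (hfr2 x)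
  have hint := aux_interface hl hr hAB
    (fun v hv => by
      have := aux_tangent hflC ha hfl2 v A
      nlinarith [mul_nonneg_of_nonpos_of_nonpos hA' (sub_nonpos.2 hv)])
    (fun v hv => by
      have := aux_tangent hfrC ha hfr2 v B
      nlinarith [mul_nonneg hB' (sub_nonneg.2 hv)]) usol
  unfold Fplus
  refine intervalIntegral.integral_mono_ae_restrict ht.2 (aux_integrable hl hr ustar hK ht)
    (aux_integrable hl hr usol hK ht) ?_
  have hchar' := ae_mono (Measure.restrict_mono
    (Icc_subset_Icc_left ht.1 : Icc t T ⊆ Icc 0 T) le_rfl) hchar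
  have hne : ∀ᵐ s : ℝ, s ≠ 0 := by simp [ae_iff]
  filter_upwards [hchar', ae_restrict_of_ae hint, ae_restrict_of_ae (aux_deriv_zero ζ),
    ae_restrict_of_ae hne, ae_restrict_mem measurableSet_Icc] with s h1 h2 h3 h4 h5
  have hs : 0 < s := lt_of_le_of_ne (ht.1.trans h5.1) (Ne.symm h4)
  rcases lt_trichotomy (ζ s) 0 with h | h | h
  · obtain ⟨d, e⟩ := h1.1 h
    simp only [if_pos h]
    rw [d.deriv, e]
    linarith [aux_tangent hflC ha hfl2 (usol.up (ζ s) s) (ustar.up (ζ s) s)]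
  · have e := (h1.2.2 h).2
    have e2 := h2 hs
    simp only [h3 h, h, lt_irrefl, if_false, zero_mul, sub_zero]
    rw [e]; exact e2
  · obtain ⟨d, e⟩ := h1.2.1 h
    simp only [if_neg h.not_gt]
    rw [d.deriv, e]
    linarith [aux_tangent hfrC ha hfr2 (usol.up (ζ s) s) (ustar.up (ζ s) s)]
end
end

section
/- Let u, u* be AB-entropy solutions of u_t + f(x,u)_x = 0 on ℝ × [0,T], let x ∈ ℝ, and let ζ ∈ C(u*, x). Then F(ζ, u) = F(ζ, u*) if and only if ζ ∈ C(u*, x) ∩ C(u, x), i.e. if and only if ζ is also an AB-genuine/interface characteristic for u. -/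
open MeasureTheory Set Filter

noncomputable section

lemma smoothing {α : ℝ → ℝ} {K : NNReal} (hα : LipschitzWith K α) {h : ℝ} (hh : 0 < h) :
    ∃ β : ℝ → ℝ, ContDiff ℝ 1 β ∧ (∀ t, HasDerivAt β (h⁻¹ * (α (t + h) - α t)) t) ∧
      ∀ t, |β t - α t| ≤ K * h := by
  have hc := hα.continuous
  have hA : ∀ t, HasDerivAt (fun t => ∫ s in (0:ℝ)..t, α s) (α t) t := fun t =>
    intervalIntegral.integral_hasDerivAt_right (hc.intervalIntegrable _ _)
      hc.aestronglyMeasurable.stronglyMeasurableAtFilter hc.continuousAt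
  have hA2 : ∀ t, HasDerivAt (fun t => ∫ s in (0:ℝ)..(t + h), α s) (α (t + h)) t := fun t =>
    (hA (t + h)).comp_add_const t h
  have hD : ∀ t, HasDerivAt (fun t => h⁻¹ * ((∫ s in (0:ℝ)..(t + h), α s) - ∫ s in (0:ℝ)..t, α s))
      (h⁻¹ * (α (t + h) - α t)) t := fun t => ((hA2 t).sub (hA t)).const_mul _
  refine ⟨_, ?_, hD, ?_⟩
  · rw [contDiff_one_iff_deriv]
    refine ⟨fun t => (hD t).differentiableAt, ?_⟩
    rw [show deriv _ = _ from funext fun t => (hD t).deriv]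
    fun_prop
  · intro t
    obtain ⟨c, hc1, hc2⟩ := exists_hasDerivAt_eq_slope (fun t => ∫ s in (0:ℝ)..t, α s) α
      (a := t) (b := t + h) (by linarith)
      (fun x _ => (hA x).continuousAt.continuousWithinAt) (fun x _ => hA x)
    have : h⁻¹ * ((∫ s in (0:ℝ)..(t + h), α s) - ∫ s in (0:ℝ)..t, α s) = α c := by
      rw [hc2]; simp only [add_sub_cancel_left]; field_simp
    rw [this]
    have h1 := hα.dist_le_mul c t
    rw [Real.dist_eq, Real.dist_eq] at h1
    refine h1.trans ?_
    gcongr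
    rw [abs_le]; constructor <;> linarith [hc1.1, hc1.2]

lemma sheared_supp {β k1 k2 : ℝ → ℝ} {ε : ℝ} (hε : 0 < ε) (hβ : Continuous β)
    (hs1 : HasCompactSupport k1) (hs2 : HasCompactSupport k2) :
    HasCompactSupport (fun p : ℝ × ℝ => k1 p.2 * k2 ((p.1 - β p.2) / ε)) := by
  refine HasCompactSupport.intro
    (K := (fun q : ℝ × ℝ => (β q.1 + ε * q.2, q.1)) '' (tsupport k1 ×ˢ tsupport k2)) ?_ ?_
  · exact (IsCompact.prod hs1 hs2).image (by fun_prop)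
  · rintro ⟨x, t⟩ hx
    by_contra hne
    apply hx
    refine ⟨(t, (x - β t) / ε), ⟨subset_tsupport _ ?_, subset_tsupport _ ?_⟩, ?_⟩
    · exact left_ne_zero_of_mul hne
    · exact right_ne_zero_of_mul hne
    · ext <;> simp
      field_simp; ring

lemma sheared_int {β k1 k2 : ℝ → ℝ} {ε : ℝ} (hε : 0 < ε) (hβ : Continuous β)
    (hk1 : Continuous k1) (hk2 : Continuous k2)
    (hs1 : HasCompactSupport k1) (hs2 : HasCompactSupport k2) {U : ℝ → ℝ → ℝ} {M : ℝ}
    (hU : Measurable (Function.uncurry U)) (hb : ∀ x t, |U x t| ≤ M) :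
    Integrable (fun p : ℝ × ℝ => U p.1 p.2 * (k1 p.2 * k2 ((p.1 - β p.2) / ε))) := by
  have h1 : Integrable (fun p : ℝ × ℝ => k1 p.2 * k2 ((p.1 - β p.2) / ε)) :=
    Continuous.integrable_of_hasCompactSupport (by fun_prop) (sheared_supp hε hβ hs1 hs2)
  exact h1.bdd_mul (c := M) hU.aestronglyMeasurable (Eventually.of_forall fun p => hb p.1 p.2)

lemma step_lemma {β ψ χ : ℝ → ℝ} {ε : ℝ} (hε : 0 < ε) (hβ : ContDiff ℝ 1 β)
    (hψ : ContDiff ℝ 1 ψ) (hχ : ContDiff ℝ 1 χ) (hsψ : HasCompactSupport ψ)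
    (hsχ : HasCompactSupport χ) (hψ0 : ∀ t, 0 ≤ ψ t) (hχ0 : ∀ t, 0 ≤ χ t)
    (hψz : ∀ t, t ≤ 0 → ψ t = 0)
    {U Q : ℝ → ℝ → ℝ} {M : ℝ}
    (hU : Measurable (Function.uncurry U)) (hQ : Measurable (Function.uncurry Q))
    (hUb : ∀ x t, |U x t| ≤ M) (hQb : ∀ x t, |Q x t| ≤ M)
    (H : ∀ φ : ℝ → ℝ → ℝ,
      ContDiff ℝ 1 (fun p : ℝ × ℝ => φ p.1 p.2) →
      HasCompactSupport (fun p : ℝ × ℝ => φ p.1 p.2) →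
      (∀ x t, 0 ≤ φ x t) →
      (∀ x t, t ≤ 0 → φ x t = 0) →
      0 ≤ ∫ p : ℝ × ℝ, (U p.1 p.2 * deriv (fun s => φ p.1 s) p.2 +
        Q p.1 p.2 * deriv (fun y => φ y p.2) p.1)) :
    AEStronglyMeasurable (fun t => ∫ y, (ε * U (β t + ε * y) t * (deriv ψ t * χ y) +
      (Q (β t + ε * y) t - deriv β t * U (β t + ε * y) t) * (ψ t * deriv χ y))) ∧
    0 ≤ ∫ t, ∫ y, (ε * U (β t + ε * y) t * (deriv ψ t * χ y) +
      (Q (β t + ε * y) t - deriv β t * U (β t + ε * y) t) * (ψ t * deriv χ y)) := by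
  have hβ' : Continuous (deriv β) := hβ.continuous_deriv le_rfl
  have hψ' : Continuous (deriv ψ) := hψ.continuous_deriv le_rfl
  have hχ' : Continuous (deriv χ) := hχ.continuous_deriv le_rfl
  set F : ℝ × ℝ → ℝ := fun p =>
    U p.1 p.2 * (deriv ψ p.2 * χ ((p.1 - β p.2) / ε)) -
    U p.1 p.2 * ((ψ p.2 * deriv β p.2 / ε) * deriv χ ((p.1 - β p.2) / ε)) +
    Q p.1 p.2 * ((ψ p.2 / ε) * deriv χ ((p.1 - β p.2) / ε)) with hF
  have hFi : Integrable F := by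
    refine ((sheared_int hε hβ.continuous hψ' hχ.continuous hsψ.deriv hsχ hU hUb).sub
      (sheared_int hε hβ.continuous (k1 := fun t => ψ t * deriv β t / ε)
        ((hψ.continuous.mul hβ').div_const _) hχ' ?_ hsχ.deriv hU hUb)).add
      (sheared_int hε hβ.continuous (k1 := fun t => ψ t / ε)
        (hψ.continuous.div_const _) hχ' ?_ hsχ.deriv hQ hQb)
    · simp only [div_eq_mul_inv, mul_assoc]
      exact hsψ.mul_right (f' := fun t => deriv β t * ε⁻¹)
    · simp only [div_eq_mul_inv]
      exact hsψ.mul_right (f' := fun t => ε⁻¹)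
  have key := H (fun x t => ψ t * χ ((x - β t) / ε))
    (by fun_prop) (sheared_supp hε hβ.continuous hsψ hsχ)
    (fun x t => mul_nonneg (hψ0 _) (hχ0 _)) (fun x t ht => by simp [hψz t ht])
  have e1 : ∀ p : ℝ × ℝ, (U p.1 p.2 * deriv (fun s => ψ s * χ ((p.1 - β s) / ε)) p.2 +
        Q p.1 p.2 * deriv (fun y => ψ p.2 * χ ((y - β p.2) / ε)) p.1) = F p := by
    intro p
    have d1 : HasDerivAt (fun s => ψ s * χ ((p.1 - β s) / ε))
        (deriv ψ p.2 * χ ((p.1 - β p.2) / ε) +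
          ψ p.2 * (deriv χ ((p.1 - β p.2) / ε) * ((-deriv β p.2) / ε))) p.2 := by
      refine ((hψ.differentiable one_ne_zero _).hasDerivAt).mul ?_
      exact HasDerivAt.comp (h₂ := χ) (h := fun s => (p.1 - β s) / ε) p.2
        (hχ.differentiable one_ne_zero _).hasDerivAt
        ((((hβ.differentiable one_ne_zero _).hasDerivAt).const_sub _).div_const _)
    have d2 : HasDerivAt (fun y => ψ p.2 * χ ((y - β p.2) / ε))
        (ψ p.2 * (deriv χ ((p.1 - β p.2) / ε) * (1 / ε))) p.1 := by
      refine HasDerivAt.const_mul _ ?_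
      exact HasDerivAt.comp (h₂ := χ) (h := fun y => (y - β p.2) / ε) p.1
        (hχ.differentiable one_ne_zero _).hasDerivAt
        (((hasDerivAt_id _).sub_const _).div_const _)
    rw [d1.deriv, d2.deriv, hF]
    ring
  simp only [e1] at key
  rw [Measure.volume_eq_prod] at key hFi
  rw [integral_prod_symm _ hFi] at key
  have e2 : ∀ t, ∫ x, F (x, t) = ∫ y, (ε * U (β t + ε * y) t * (deriv ψ t * χ y) +
      (Q (β t + ε * y) t - deriv β t * U (β t + ε * y) t) * (ψ t * deriv χ y)) := by
    intro t
    have := Measure.integral_comp_mul_left (fun y => F (β t + y, t)) ε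
    rw [integral_add_left_eq_self (fun y => F (y, t))] at this
    rw [abs_of_pos (inv_pos.2 hε), smul_eq_mul] at this
    have h3 : ∫ x, F (x, t) = ε * ∫ y, F (β t + ε * y, t) := by
      rw [this]; field_simp
    rw [h3, ← integral_const_mul]
    congr 1; ext y
    have : (β t + ε * y - β t) / ε = y := by field_simp; ring
    simp only [hF, this]
    field_simp
    ring
  simp only [e2] at key
  refine ⟨?_, key⟩
  have := hFi.swap.integral_prod_left.aestronglyMeasurable
  simpa only [Function.comp, Prod.swap, e2] using this

lemma limit_lemma {α ψ χ : ℝ → ℝ} {K : NNReal} (hα : LipschitzWith K α)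
    (hψ : ContDiff ℝ 1 ψ) (hχ : ContDiff ℝ 1 χ) (hsψ : HasCompactSupport ψ)
    (hsχ : HasCompactSupport χ) (hψ0 : ∀ t, 0 ≤ ψ t) (hχ0 : ∀ t, 0 ≤ χ t)
    (hψz : ∀ t, t ≤ 0 → ψ t = 0) (hχ1 : χ 0 = 1)
    {U Q : ℝ → ℝ → ℝ} {M : ℝ}
    (hU : Measurable (Function.uncurry U)) (hQ : Measurable (Function.uncurry Q))
    (hUb : ∀ x t, |U x t| ≤ M) (hQb : ∀ x t, |Q x t| ≤ M)
    (H : ∀ φ : ℝ → ℝ → ℝ,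
      ContDiff ℝ 1 (fun p : ℝ × ℝ => φ p.1 p.2) →
      HasCompactSupport (fun p : ℝ × ℝ => φ p.1 p.2) →
      (∀ x t, 0 ≤ φ x t) →
      (∀ x t, t ≤ 0 → φ x t = 0) →
      0 ≤ ∫ p : ℝ × ℝ, (U p.1 p.2 * deriv (fun s => φ p.1 s) p.2 +
        Q p.1 p.2 * deriv (fun y => φ y p.2) p.1))
    {Um Up Qm Qp : ℝ → ℝ}
    (hUm : ∀ t, 0 < t → Tendsto (fun y => U y t) (nhdsWithin (α t) (Iio (α t))) (nhds (Um t)))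
    (hUp : ∀ t, 0 < t → Tendsto (fun y => U y t) (nhdsWithin (α t) (Ioi (α t))) (nhds (Up t)))
    (hQm : ∀ t, 0 < t → Tendsto (fun y => Q y t) (nhdsWithin (α t) (Iio (α t))) (nhds (Qm t)))
    (hQp : ∀ t, 0 < t → Tendsto (fun y => Q y t) (nhdsWithin (α t) (Ioi (α t))) (nhds (Qp t))) :
    0 ≤ ∫ t, ψ t * ((Qm t - deriv α t * Um t) - (Qp t - deriv α t * Up t)) := by
  have hM : 0 ≤ M := (abs_nonneg _).trans (hUb 0 0)
  have hψ' : Continuous (deriv ψ) := hψ.continuous_deriv le_rfl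
  have hχ' : Continuous (deriv χ) := hχ.continuous_deriv le_rfl
  set ε : ℕ → ℝ := fun n => 1 / ((n : ℝ) + 1) with hεdef
  have hε : ∀ n, 0 < ε n := fun n => by simp only [hεdef]; positivity
  have hε1 : ∀ n, ε n ≤ 1 := fun n => by
    simp only [hεdef]; rw [div_le_one (by positivity)]; linarith [(Nat.cast_nonneg n : (0:ℝ) ≤ n)]
  have hεt : Tendsto ε atTop (nhds 0) := tendsto_one_div_add_atTop_nhds_zero_nat
  have hh : ∀ n, 0 < ε n ^ 2 := fun n => pow_pos (hε n) 2
  choose β hβC hβD hβa using fun n => smoothing hα (hh n)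
  set I : ℕ → ℝ → ℝ → ℝ := fun n t y => (ε n * U (β n t + ε n * y) t * (deriv ψ t * χ y) +
      (Q (β n t + ε n * y) t - deriv (β n) t * U (β n t + ε n * y) t) * (ψ t * deriv χ y)) with hI
  have hstep := fun n => step_lemma (hε n) (hβC n) hψ hχ hsψ hsχ hψ0 hχ0 hψz hU hQ hUb hQb H
  have hβ'b : ∀ n t, |deriv (β n) t| ≤ K := by
    intro n t
    rw [(hβD n t).deriv, abs_mul, abs_of_pos (inv_pos.2 (hh n))]
    have h1 := hα.dist_le_mul (t + ε n ^ 2) t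
    rw [Real.dist_eq, Real.dist_eq, add_sub_cancel_left, abs_of_pos (hh n)] at h1
    rw [inv_mul_le_iff₀ (hh n)]; linarith
  set bd : ℝ → ℝ → ℝ := fun t y => M * |deriv ψ t| * |χ y| + (M + K * M) * |ψ t| * |deriv χ y|
  have hIb : ∀ n t y, ‖I n t y‖ ≤ bd t y := by
    intro n t y
    simp only [hI, Real.norm_eq_abs, bd]
    refine (abs_add_le _ _).trans (add_le_add ?_ ?_)
    · rw [abs_mul, abs_mul, abs_mul, abs_of_pos (hε n), mul_assoc M]
      gcongr
      calc ε n * |U (β n t + ε n * y) t| ≤ 1 * M := by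
            gcongr
            · exact hε1 n
            · exact hUb _ _
        _ = M := one_mul _
    · rw [abs_mul, abs_mul, mul_assoc (M + K * M)]
      gcongr
      refine (abs_sub _ _).trans (add_le_add (hQb _ _) ?_)
      rw [abs_mul]
      exact mul_le_mul (hβ'b _ _) (hUb _ _) (abs_nonneg _) (by positivity)
  have hχi : Integrable (fun y => |χ y|) :=
    (hχ.continuous.integrable_of_hasCompactSupport hsχ).abs
  have hχ'i : Integrable (fun y => |deriv χ y|) :=
    (hχ'.integrable_of_hasCompactSupport hsχ.deriv).abs
  have hψi : Integrable (fun y => |ψ y|) :=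
    (hψ.continuous.integrable_of_hasCompactSupport hsψ).abs
  have hψ'i : Integrable (fun y => |deriv ψ y|) :=
    (hψ'.integrable_of_hasCompactSupport hsψ.deriv).abs
  have hbdi : ∀ t, Integrable (bd t) := fun t =>
    (hχi.const_mul _).add (hχ'i.const_mul _)
  have hbde : ∀ t, ∫ y, bd t y = M * |deriv ψ t| * (∫ y, |χ y|) +
      (M + K * M) * |ψ t| * ∫ y, |deriv χ y| := by
    intro t
    simp only [bd]
    rw [integral_add (hχi.const_mul _) (hχ'i.const_mul _), integral_const_mul, integral_const_mul]
  have hbdi2 : Integrable (fun t => ∫ y, bd t y) := by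
    simp only [hbde]
    exact ((hψ'i.const_mul _).mul_const _).add ((hψi.const_mul _).mul_const _)
  set Gm : ℝ → ℝ := fun t => Qm t - deriv α t * Um t
  set Gp : ℝ → ℝ := fun t => Qp t - deriv α t * Up t
  set L : ℝ → ℝ → ℝ := fun t y => (if 0 < y then Gp t else Gm t) * (ψ t * deriv χ y) with hL
  have hIm : ∀ n t, AEStronglyMeasurable (I n t) := by
    intro n t
    have m1 : Measurable (fun y => U (β n t + ε n * y) t) :=
      hU.comp (g := Function.uncurry U) (f := fun y => (β n t + ε n * y, t)) (by fun_prop)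
    have m2 : Measurable (fun y => Q (β n t + ε n * y) t) :=
      hQ.comp (g := Function.uncurry Q) (f := fun y => (β n t + ε n * y, t)) (by fun_prop)
    have m3 := hχ.continuous.measurable
    have m4 := hχ'.measurable
    have : Measurable (I n t) := by simp only [hI]; fun_prop
    exact this.aestronglyMeasurable
  have hlim : ∀ t, DifferentiableAt ℝ α t → ∀ y, y ≠ 0 →
      Tendsto (fun n => I n t y) atTop (nhds (L t y)) := by
    intro t hd y hy
    rw [← zero_add (L t y)]
    refine Tendsto.add ?_ ?_
    · refine squeeze_zero_norm (a := fun n => ε n * (M * |deriv ψ t * χ y|)) ?_ ?_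
      · intro n
        rw [Real.norm_eq_abs, abs_mul, abs_mul, abs_of_pos (hε n), mul_assoc]
        have := hε n
        gcongr
        exact hUb _ _
      · simpa using hεt.mul_const (M * |deriv ψ t * χ y|)
    · by_cases ht : t ≤ 0
      · simp [hL, hψz t ht]
      push Not at ht
      refine Tendsto.mul_const _ ?_
      have hb' : Tendsto (fun n => deriv (β n) t) atTop (nhds (deriv α t)) := by
        simp only [fun n => (hβD n t).deriv]
        have h1 := hasDerivAt_iff_tendsto_slope_zero.1 hd.hasDerivAt
        have h2 : Tendsto (fun n => ε n ^ 2) atTop (nhdsWithin 0 {0}ᶜ) := by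
          rw [tendsto_nhdsWithin_iff]
          refine ⟨by simpa using hεt.pow 2, Eventually.of_forall fun n => (hh n).ne'⟩
        simpa only [smul_eq_mul, Function.comp_def] using h1.comp h2
      have hpos : Tendsto (fun n => β n t + ε n * y) atTop (nhds (α t)) := by
        have h1 : Tendsto (fun n => β n t - α t) atTop (nhds 0) := by
          refine squeeze_zero_norm (a := fun n => K * ε n ^ 2) (fun n => hβa n t) ?_
          simpa using (hεt.pow 2).const_mul (K : ℝ)
        have h2 := (h1.add (hεt.mul_const y)).add_const (α t)
        simp only [zero_mul, zero_add] at h2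
        refine h2.congr fun n => by ring
      have hKε : Tendsto (fun n => K * ε n) atTop (nhds 0) := by
        simpa using hεt.const_mul (K : ℝ)
      rcases lt_or_gt_of_ne hy with hy | hy
      · have hw : Tendsto (fun n => β n t + ε n * y) atTop (nhdsWithin (α t) (Iio (α t))) := by
          rw [tendsto_nhdsWithin_iff]
          refine ⟨hpos, ?_⟩
          filter_upwards [hKε.eventually (gt_mem_nhds (show 0 < -y by linarith))] with n hn
          have := (abs_le.1 (hβa n t)).2
          have := mul_lt_mul_of_pos_left hn (hε n)
          simp only [mem_Iio]; nlinarith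
        simp only [if_neg (not_lt.2 hy.le)]
        exact ((hQm t ht).comp hw).sub (hb'.mul ((hUm t ht).comp hw))
      · have hw : Tendsto (fun n => β n t + ε n * y) atTop (nhdsWithin (α t) (Ioi (α t))) := by
          rw [tendsto_nhdsWithin_iff]
          refine ⟨hpos, ?_⟩
          filter_upwards [hKε.eventually (gt_mem_nhds hy)] with n hn
          have := (abs_le.1 (hβa n t)).1
          have := mul_lt_mul_of_pos_left hn (hε n)
          simp only [mem_Ioi]; nlinarith
        simp only [if_pos hy]
        exact ((hQp t ht).comp hw).sub (hb'.mul ((hUp t ht).comp hw))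
  have hne : ∀ᵐ y : ℝ, y ≠ 0 := by simp [ae_iff]
  have hinner : ∀ t, DifferentiableAt ℝ α t →
      Tendsto (fun n => ∫ y, I n t y) atTop (nhds (∫ y, L t y)) := by
    intro t hd
    refine tendsto_integral_of_dominated_convergence (bd t) (fun n => hIm n t) (hbdi t)
      (fun n => Eventually.of_forall (hIb n t)) ?_
    filter_upwards [hne] with y hy using hlim t hd y hy
  have houter : Tendsto (fun n => ∫ t, ∫ y, I n t y) atTop (nhds (∫ t, ∫ y, L t y)) := by
    refine tendsto_integral_of_dominated_convergence _ (fun n => (hstep n).1) hbdi2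
      (fun n => Eventually.of_forall fun t => ?_) ?_
    · exact norm_integral_le_of_norm_le (hbdi t) (Eventually.of_forall (hIb n t))
    · filter_upwards [hα.ae_differentiableAt_real] with t ht using hinner t ht
  have hfin := ge_of_tendsto' houter (fun n => (hstep n).2)
  have hLe : ∀ t, ∫ y, L t y = ψ t * (Gm t - Gp t) := by
    intro t
    have hi : Integrable (deriv χ) := hχ'.integrable_of_hasCompactSupport hsχ.deriv
    have e1 : L t = fun y => (Ioi (0:ℝ)).indicator (fun y => Gp t * ψ t * deriv χ y) y +
        (Iic (0:ℝ)).indicator (fun y => Gm t * ψ t * deriv χ y) y := by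
      ext y
      by_cases hy : 0 < y
      · simp [hL, hy]; ring
      · simp [hL, hy, not_lt.1 hy]; ring
    rw [e1, integral_add ((hi.const_mul _).indicator measurableSet_Ioi)
      ((hi.const_mul _).indicator measurableSet_Iic), integral_indicator measurableSet_Ioi,
      integral_indicator measurableSet_Iic, integral_const_mul, integral_const_mul,
      hsχ.integral_Ioi_deriv_eq hχ, hsχ.integral_Iic_deriv_eq hχ, hχ1]
    ring
  simpa only [hLe] using hfin

lemma ae_nonneg_of_test {D : ℝ → ℝ} (hD : LocallyIntegrable D)
    (h : ∀ ψ : ℝ → ℝ, ContDiff ℝ 1 ψ → HasCompactSupport ψ → (∀ t, 0 ≤ ψ t) →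
      (∀ t, t ≤ 0 → ψ t = 0) → 0 ≤ ∫ t, ψ t * D t) : ∀ᵐ t, 0 < t → 0 ≤ D t := by
  let φ : ℕ → ContDiffBump (0 : ℝ) := fun n =>
    ⟨1 / ((n : ℝ) + 1), 2 * (1 / ((n : ℝ) + 1)), by positivity, by
      have : 0 < 1 / ((n : ℝ) + 1) := by positivity
      linarith⟩
  have hφ : Tendsto (fun n => (φ n).rOut) atTop (nhds 0) := by
    simpa [φ] using (tendsto_one_div_add_atTop_nhds_zero_nat (𝕜 := ℝ)).const_mul 2
  have := ContDiffBump.ae_convolution_tendsto_right_of_locallyIntegrable (μ := volume) (K := 2) hφ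
    (Eventually.of_forall fun n => le_rfl) hD
  filter_upwards [this] with t ht htpos
  refine ge_of_tendsto ht ?_
  filter_upwards [hφ.eventually (gt_mem_nhds htpos)] with n hn
  rw [convolution_lsmul_swap]
  simp only [smul_eq_mul]
  refine h (fun s => (φ n).normed volume (t - s)) ?_ ?_ ?_ ?_
  · exact (φ n).contDiff_normed.comp (contDiff_const.sub contDiff_id)
  · exact ((φ n).hasCompactSupport_normed).comp_homeomorph (Homeomorph.subLeft t)
  · intro s; exact (φ n).nonneg_normed _
  · intro s hs
    have : t - s ∉ Function.support ((φ n).normed volume) := by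
      rw [ContDiffBump.support_normed_eq]
      simp only [Metric.mem_ball, dist_zero_right, Real.norm_eq_abs, not_lt]
      rw [abs_of_pos (by linarith)]; linarith
    simpa using this

lemma trace_meas {α : ℝ → ℝ} {K : NNReal} (hα : LipschitzWith K α) {M : ℝ} (hM : 0 ≤ M)
    (V : ℝ → ℝ → ℝ) (W : ℝ → ℝ) (hV : Measurable (Function.uncurry V))
    (hVb : ∀ x t, |V x t| ≤ M)
    (hW : (∀ t, 0 < t → Tendsto (fun y => V y t) (nhdsWithin (α t) (Iio (α t))) (nhds (W t))) ∨
       (∀ t, 0 < t → Tendsto (fun y => V y t) (nhdsWithin (α t) (Ioi (α t))) (nhds (W t)))) :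
      Measurable ((Ioi (0:ℝ)).indicator W) ∧ ∀ t, |(Ioi (0:ℝ)).indicator W t| ≤ M := by
    have hεt := tendsto_one_div_add_atTop_nhds_zero_nat (𝕜 := ℝ)
    obtain ⟨σ, hσ⟩ : ∃ σ : ℝ, ∀ t, 0 < t →
        Tendsto (fun n : ℕ => V (α t + σ * (1 / ((n:ℝ) + 1))) t) atTop (nhds (W t)) := by
      rcases hW with hW | hW
      · refine ⟨-1, fun t ht => (hW t ht).comp ?_⟩
        rw [tendsto_nhdsWithin_iff]
        refine ⟨by simpa using (hεt.const_mul (-1)).const_add (α t), Eventually.of_forall fun n => ?_⟩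
        have : 0 < 1 / ((n:ℝ) + 1) := by positivity
        simp only [mem_Iio]; linarith
      · refine ⟨1, fun t ht => (hW t ht).comp ?_⟩
        rw [tendsto_nhdsWithin_iff]
        refine ⟨by simpa using (hεt.const_mul 1).const_add (α t), Eventually.of_forall fun n => ?_⟩
        have : 0 < 1 / ((n:ℝ) + 1) := by positivity
        simp only [mem_Ioi]; linarith
    constructor
    · refine measurable_of_tendsto_metrizable
        (f := fun (n : ℕ) => (Ioi (0:ℝ)).indicator (fun t => V (α t + σ * (1 / ((n:ℝ) + 1))) t)) ?_ ?_
      · intro n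
        refine Measurable.indicator ?_ measurableSet_Ioi
        have := hα.continuous.measurable
        exact hV.comp (g := Function.uncurry V)
          (f := fun t => (α t + σ * (1 / ((n:ℝ) + 1)), t)) (by fun_prop)
      · rw [tendsto_pi_nhds]
        intro t
        by_cases ht : 0 < t
        · simpa [ht] using hσ t ht
        · simp [ht]
    · intro t
      by_cases ht : 0 < t
      · simp only [mem_Ioi, ht, indicator_of_mem]
        exact le_of_tendsto' (hσ t ht).abs (fun n => hVb _ _)
      · simpa [ht] using hM

lemma trace_lemma {α : ℝ → ℝ} {K : NNReal} (hα : LipschitzWith K α)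
    {U Q : ℝ → ℝ → ℝ} {M : ℝ}
    (hU : Measurable (Function.uncurry U)) (hQ : Measurable (Function.uncurry Q))
    (hUb : ∀ x t, |U x t| ≤ M) (hQb : ∀ x t, |Q x t| ≤ M)
    (H : ∀ φ : ℝ → ℝ → ℝ,
      ContDiff ℝ 1 (fun p : ℝ × ℝ => φ p.1 p.2) →
      HasCompactSupport (fun p : ℝ × ℝ => φ p.1 p.2) →
      (∀ x t, 0 ≤ φ x t) →
      (∀ x t, t ≤ 0 → φ x t = 0) →
      0 ≤ ∫ p : ℝ × ℝ, (U p.1 p.2 * deriv (fun s => φ p.1 s) p.2 +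
        Q p.1 p.2 * deriv (fun y => φ y p.2) p.1))
    {Um Up Qm Qp : ℝ → ℝ}
    (hUm : ∀ t, 0 < t → Tendsto (fun y => U y t) (nhdsWithin (α t) (Iio (α t))) (nhds (Um t)))
    (hUp : ∀ t, 0 < t → Tendsto (fun y => U y t) (nhdsWithin (α t) (Ioi (α t))) (nhds (Up t)))
    (hQm : ∀ t, 0 < t → Tendsto (fun y => Q y t) (nhdsWithin (α t) (Iio (α t))) (nhds (Qm t)))
    (hQp : ∀ t, 0 < t → Tendsto (fun y => Q y t) (nhdsWithin (α t) (Ioi (α t))) (nhds (Qp t))) :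
    ∀ᵐ t, 0 < t → Qp t - deriv α t * Up t ≤ Qm t - deriv α t * Um t := by
  have hM : 0 ≤ M := (abs_nonneg _).trans (hUb 0 0)
  have tr := trace_meas hα hM
  obtain ⟨m1, b1⟩ := tr U Um hU hUb (Or.inl hUm)
  obtain ⟨m2, b2⟩ := tr U Up hU hUb (Or.inr hUp)
  obtain ⟨m3, b3⟩ := tr Q Qm hQ hQb (Or.inl hQm)
  obtain ⟨m4, b4⟩ := tr Q Qp hQ hQb (Or.inr hQp)
  set iUm := (Ioi (0:ℝ)).indicator Um
  set iUp := (Ioi (0:ℝ)).indicator Up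
  set iQm := (Ioi (0:ℝ)).indicator Qm
  set iQp := (Ioi (0:ℝ)).indicator Qp
  have hda : ∀ t, |deriv α t| ≤ K := fun t => norm_deriv_le_of_lipschitz hα
  set D : ℝ → ℝ := fun t => (iQm t - deriv α t * iUm t) - (iQp t - deriv α t * iUp t) with hDdef
  have hDm : Measurable D := by
    have := measurable_deriv α
    fun_prop
  have hpr : ∀ (w : ℝ → ℝ) (_ : ∀ t, |w t| ≤ M) t, |deriv α t * w t| ≤ K * M := by
    intro w hw t
    rw [abs_mul]; exact mul_le_mul (hda t) (hw t) (abs_nonneg _) (by positivity)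
  have hDb : ∀ t, ‖D t‖ ≤ (M + K * M) + (M + K * M) := fun t =>
    (abs_sub _ _).trans (add_le_add
      ((abs_sub _ _).trans (add_le_add (b3 t) (hpr _ b1 t)))
      ((abs_sub _ _).trans (add_le_add (b4 t) (hpr _ b2 t))))
  have hDl : LocallyIntegrable D := by
    refine (locallyIntegrable_const ((M + K * M) + (M + K * M))).mono hDm.aestronglyMeasurable ?_
    exact Eventually.of_forall fun t => (hDb t).trans (le_abs_self _)
  let b : ContDiffBump (0:ℝ) := ⟨1, 2, by norm_num, by norm_num⟩
  have := ae_nonneg_of_test hDl (fun ψ h1 h2 h3 h4 => by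
    have := limit_lemma hα h1 (b.contDiff (n := 1)) h2 b.hasCompactSupport h3 (fun t => b.nonneg) h4
      (b.one_of_mem_closedBall (by simp [b])) hU hQ hUb hQb H hUm hUp hQm hQp
    refine this.trans_eq ?_
    congr 1; ext t
    by_cases ht : 0 < t
    · simp [hDdef, ht, iUm, iUp, iQm, iQp]
    · simp [h4 t (not_lt.1 ht)])
  filter_upwards [this] with t ht hpos
  have := ht hpos
  simp only [hDdef, iUm, iUp, iQm, iQp, mem_Ioi, hpos, indicator_of_mem] at this
  linarith

lemma tangent_lt {f : ℝ → ℝ} (hd : Differentiable ℝ f) (hm : StrictMono (deriv f)) {v w : ℝ}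
    (h : v ≠ w) : f w + deriv f w * (v - w) < f v := by
  rcases lt_or_gt_of_ne h with h | h
  · obtain ⟨c, hc, e⟩ := exists_deriv_eq_slope f h hd.continuous.continuousOn hd.differentiableOn
    have h1 := hm hc.2
    rw [eq_div_iff (by linarith)] at e
    nlinarith
  · obtain ⟨c, hc, e⟩ := exists_deriv_eq_slope f h hd.continuous.continuousOn hd.differentiableOn
    have h1 := hm hc.1
    rw [eq_div_iff (by linarith)] at e
    nlinarith

lemma tangent_le {f : ℝ → ℝ} (hd : Differentiable ℝ f) (hm : StrictMono (deriv f)) (v w : ℝ) :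
    f w + deriv f w * (v - w) ≤ f v := by
  by_cases h : v = w
  · simp [h]
  · exact (tangent_lt hd hm h).le

lemma ae_deriv_zero (α : ℝ → ℝ) : ∀ᵐ t, α t = 0 → deriv α t = 0 := by
  have h := (countable_setOfPred_isolated_right_within (s := {t : ℝ | α t = 0})).ae_notMem volume
  filter_upwards [h] with t ht h0
  by_contra hne
  have hd : DifferentiableAt ℝ α t := by
    by_contra hn; exact hne (deriv_zero_of_not_differentiableAt hn)
  have h1 := hd.hasDerivAt.eventually_ne (c := 0) hne
  have h2 : ∀ᶠ z in nhdsWithin t (Ioi t), α z ≠ 0 :=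
    h1.filter_mono (nhdsWithin_mono _ (fun z hz => (ne_of_gt hz)))
  apply ht
  refine ⟨h0, ?_⟩
  rw [← empty_mem_iff_bot, inter_comm, nhdsWithin_inter', mem_inf_principal]
  filter_upwards [h2] with z hz hz2
  exact hz hz2

lemma dflux_right_lim {fl fr g : ℝ → ℝ} (hl : Continuous fl) (hr : Continuous fr) {x l : ℝ}
    (h : Tendsto g (nhdsWithin x (Ioi x)) (nhds l)) :
    Tendsto (fun y => dflux fl fr y (g y)) (nhdsWithin x (Ioi x))
      (nhds (if x < 0 then fl l else fr l)) := by
  by_cases hx : x < 0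
  · rw [if_pos hx]
    refine ((hl.tendsto l).comp h).congr' ?_
    filter_upwards [nhdsWithin_le_nhds (Iio_mem_nhds hx)] with y hy
    have : y < 0 := hy
    simp [dflux, this]
  · rw [if_neg hx]
    refine ((hr.tendsto l).comp h).congr' ?_
    filter_upwards [self_mem_nhdsWithin] with y hy
    have : x < y := hy
    have : ¬ y < 0 := by linarith
    simp [dflux, this]

lemma dflux_left_lim {fl fr g : ℝ → ℝ} (hl : Continuous fl) (hr : Continuous fr) {x l : ℝ}
    (h : Tendsto g (nhdsWithin x (Iio x)) (nhds l)) :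
    Tendsto (fun y => dflux fl fr y (g y)) (nhdsWithin x (Iio x))
      (nhds (if x ≤ 0 then fl l else fr l)) := by
  by_cases hx : x ≤ 0
  · rw [if_pos hx]
    refine ((hl.tendsto l).comp h).congr' ?_
    filter_upwards [self_mem_nhdsWithin] with y hy
    have : y < x := hy
    have : y < 0 := by linarith
    simp [dflux, this]
  · rw [if_neg hx]
    refine ((hr.tendsto l).comp h).congr' ?_
    filter_upwards [nhdsWithin_le_nhds (Ioi_mem_nhds (not_le.1 hx))] with y hy
    have : 0 < y := hy
    simp [dflux, this.le]

lemma exists_cont_bd {f : ℝ → ℝ} (hf : Continuous f) (M : ℝ) :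
    ∃ C, ∀ v, |v| ≤ M → |f v| ≤ C := by
  obtain ⟨C, hC⟩ := (isCompact_Icc (a := -M) (b := M)).exists_bound_of_continuousOn hf.continuousOn
  exact ⟨C, fun v hv => hC v (abs_le.1 hv)⟩

lemma sol_facts {fl fr : ℝ → ℝ} (hl : Continuous fl) (hr : Continuous fr) {A B : ℝ}
    {u0 : ℝ → ℝ} (sol : ABSol fl fr A B u0) :
    Measurable (Function.uncurry fun x t => dflux fl fr x (sol.u x t)) ∧
    ∃ M, (∀ x t, |sol.u x t| ≤ M) ∧ ∀ x t, |dflux fl fr x (sol.u x t)| ≤ M := by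
  constructor
  · have h1 := sol.meas
    refine Measurable.ite (measurableSet_lt measurable_fst measurable_const) ?_ ?_
    · exact hl.measurable.comp h1
    · exact hr.measurable.comp h1
  · obtain ⟨M, hM⟩ := sol.bdd
    obtain ⟨C, hC⟩ := exists_cont_bd hl M
    obtain ⟨C', hC'⟩ := exists_cont_bd hr M
    refine ⟨max M (max C C'), fun x t => (hM x t).trans (le_max_left _ _), fun x t => ?_⟩
    unfold dflux
    split_ifs
    · exact (hC _ (hM x t)).trans ((le_max_left _ _).trans (le_max_right _ _))
    · exact (hC' _ (hM x t)).trans ((le_max_right _ _).trans (le_max_right _ _))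

lemma rankine_hugoniot {fl fr : ℝ → ℝ} (hl : Continuous fl) (hr : Continuous fr) {A B : ℝ}
    {u0 : ℝ → ℝ} (sol : ABSol fl fr A B u0) {α : ℝ → ℝ} {K : NNReal} (hα : LipschitzWith K α) :
    ∀ᵐ t, 0 < t →
      (if α t < 0 then fl (sol.up (α t) t) else fr (sol.up (α t) t)) -
        deriv α t * sol.up (α t) t =
      (if α t ≤ 0 then fl (sol.um (α t) t) else fr (sol.um (α t) t)) -
        deriv α t * sol.um (α t) t := by
  obtain ⟨hQ, M, hUb, hQb⟩ := sol_facts hl hr sol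
  have um := fun t (ht : 0 < t) => sol.um_spec (α t) t ht
  have up := fun t (ht : 0 < t) => sol.up_spec (α t) t ht
  have qm := fun t (ht : 0 < t) => dflux_left_lim hl hr (um t ht)
  have qp := fun t (ht : 0 < t) => dflux_right_lim hl hr (up t ht)
  have h1 := trace_lemma hα sol.meas hQ hUb hQb
    (fun φ a1 a2 _ a4 => (sol.weak φ a1 a2 a4).ge) um up qm qp
  have h2 := trace_lemma (U := fun x t => - sol.u x t)
    (Q := fun x t => - dflux fl fr x (sol.u x t)) (M := M) hα sol.meas.neg hQ.neg
    (fun x t => by simpa using hUb x t) (fun x t => by simpa using hQb x t)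
    (fun φ a1 a2 _ a4 => by
      have := sol.weak φ a1 a2 a4
      simp only [neg_mul, ← neg_add]
      rw [integral_neg, this, neg_zero])
    (fun t ht => (um t ht).neg) (fun t ht => (up t ht).neg)
    (fun t ht => (qm t ht).neg) (fun t ht => (qp t ht).neg)
  filter_upwards [h1, h2] with t a1 a2 ht
  have := a1 ht
  have := a2 ht
  linarith

lemma sign_mul_cont {f : ℝ → ℝ} (hf : Continuous f) (k : ℝ) :
    Continuous (fun v => Real.sign (v - k) * (f v - f k)) := by
  have : (fun v => Real.sign (v - k) * (f v - f k)) =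
      fun v => if v ≤ k then -(f v - f k) else f v - f k := by
    ext v
    rcases lt_trichotomy v k with h | h | h
    · rw [Real.sign_of_neg (by linarith), if_pos h.le]; ring
    · simp [h]
    · rw [Real.sign_of_pos (by linarith), if_neg (by linarith)]; ring
  rw [this]
  refine Continuous.if_le (by fun_prop) (by fun_prop) continuous_id continuous_const ?_
  intro v hv; simp [hv]

lemma interface_ge {fl fr : ℝ → ℝ} (hl : Differentiable ℝ fl) (hr : Differentiable ℝ fr)
    (ml : StrictMono (deriv fl)) (mr : StrictMono (deriv fr)) {A B : ℝ}
    (hAB : fl A = fr B) (hA' : deriv fl A ≤ 0) (hB' : 0 ≤ deriv fr B)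
    {u0 : ℝ → ℝ} (sol : ABSol fl fr A B u0) :
    ∀ᵐ t, 0 < t → fl A ≤ fr (sol.up 0 t) := by
  have rh := rankine_hugoniot hl.continuous hr.continuous sol (α := fun _ => 0) (K := 0)
    (LipschitzWith.const 0)
  obtain ⟨M, hM⟩ := sol.bdd
  set ql : ℝ → ℝ := fun v => Real.sign (v - A) * (fl v - fl A) with hql
  set qr : ℝ → ℝ := fun v => Real.sign (v - B) * (fr v - fr B) with hqr
  have cl : Continuous ql := sign_mul_cont hl.continuous A
  have cr : Continuous qr := sign_mul_cont hr.continuous B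
  obtain ⟨C, hC⟩ := exists_cont_bd cl M
  obtain ⟨C', hC'⟩ := exists_cont_bd cr M
  set Q : ℝ → ℝ → ℝ := fun x t => dflux ql qr x (sol.u x t) with hQdef
  set U : ℝ → ℝ → ℝ := fun x t => |sol.u x t - cAB A B x| with hUdef
  have hQ : Measurable (Function.uncurry Q) := by
    refine Measurable.ite (measurableSet_lt measurable_fst measurable_const) ?_ ?_
    · exact cl.measurable.comp sol.meas
    · exact cr.measurable.comp sol.meas
  have hU : Measurable (Function.uncurry U) := by
    refine (Measurable.sub sol.meas ?_).abs
    exact Measurable.ite (measurableSet_le measurable_fst measurable_const)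
      measurable_const measurable_const
  have hUb : ∀ x t, |U x t| ≤ max (M + max |A| |B|) (max C C') := by
    intro x t
    refine le_trans ?_ (le_max_left _ _)
    simp only [hUdef, abs_abs]
    refine (abs_sub _ _).trans (add_le_add (hM x t) ?_)
    unfold cAB; split_ifs
    · exact le_max_left _ _
    · exact le_max_right _ _
  have hQb : ∀ x t, |Q x t| ≤ max (M + max |A| |B|) (max C C') := by
    intro x t
    refine le_trans ?_ (le_max_right _ _)
    simp only [hQdef, dflux]; split_ifs
    · exact (hC _ (hM x t)).trans (le_max_left _ _)
    · exact (hC' _ (hM x t)).trans (le_max_right _ _)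
  have n0 : ∀ᵐ p : ℝ × ℝ, p.1 ≠ 0 := by
    rw [Measure.volume_eq_prod]
    refine Measure.quasiMeasurePreserving_fst.ae (p := fun y : ℝ => y ≠ 0) ?_
    simp [ae_iff]
  have ent := trace_lemma (α := fun _ => (0:ℝ)) (K := 0) (LipschitzWith.const 0) hU hQ hUb hQb
    (Um := fun t => |sol.um 0 t - A|) (Up := fun t => |sol.up 0 t - B|)
    (Qm := fun t => ql (sol.um 0 t)) (Qp := fun t => qr (sol.up 0 t))
    (fun φ a1 a2 a3 a4 => by
      refine (sol.interfaceEntropy φ a1 a2 a3 a4).trans_eq (integral_congr_ae ?_)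
      filter_upwards [n0] with p hp
      simp only [hUdef, hQdef, dflux, cAB, hql, hqr]
      rcases lt_or_gt_of_ne hp with h | h
      · simp [h, h.le]
      · simp [not_lt.2 h.le, not_le.2 h])
    (fun t ht => by
      refine ((sol.um_spec 0 t ht).sub_const A).abs.congr' ?_
      filter_upwards [self_mem_nhdsWithin] with y hy
      have : y ≤ 0 := le_of_lt hy
      simp [hUdef, cAB, this])
    (fun t ht => by
      refine ((sol.up_spec 0 t ht).sub_const B).abs.congr' ?_
      filter_upwards [self_mem_nhdsWithin] with y hy
      have : ¬ y ≤ 0 := not_le.2 hy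
      simp [hUdef, cAB, this])
    (fun t ht => by
      simpa using dflux_left_lim cl cr (sol.um_spec 0 t ht))
    (fun t ht => by
      simpa using dflux_right_lim cl cr (sol.up_spec 0 t ht))
  filter_upwards [rh, ent] with t h1 h2 ht
  have h1 := h1 ht
  have h2 := h2 ht
  simp only [deriv_const, zero_mul, sub_zero, lt_irrefl, le_refl, if_true, if_false] at h1 h2
  by_contra hlt
  push Not at hlt
  have k1 : A < sol.um 0 t := by
    by_contra hn
    have := tangent_le hl ml (sol.um 0 t) A
    nlinarith
  have k2 : sol.up 0 t < B := by
    by_contra hn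
    have := tangent_le hr mr (sol.up 0 t) B
    nlinarith
  simp only [hql, hqr] at h2
  rw [Real.sign_of_neg (by linarith), Real.sign_of_pos (by linarith)] at h2
  linarith

lemma flux_integrable {fl fr : ℝ → ℝ} (hl : Continuous fl) (hr : Continuous fr) {A B : ℝ}
    {u0 : ℝ → ℝ} (sol : ABSol fl fr A B u0) {α : ℝ → ℝ} {K : NNReal} (hα : LipschitzWith K α)
    (T : ℝ) :
    IntegrableOn (fun t => (if α t < 0 then fl (sol.up (α t) t) else fr (sol.up (α t) t)) -
        deriv α t * sol.up (α t) t) (Ioo 0 T) := by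
  obtain ⟨hQ, M, hUb, hQb⟩ := sol_facts hl hr sol
  have hM : 0 ≤ M := (abs_nonneg _).trans (hUb 0 0)
  have up := fun t (ht : 0 < t) => sol.up_spec (α t) t ht
  have qp := fun t (ht : 0 < t) => dflux_right_lim hl hr (up t ht)
  obtain ⟨m1, b1⟩ := trace_meas hα hM _ _ sol.meas hUb (Or.inr up)
  obtain ⟨m2, b2⟩ := trace_meas hα hM _ _ hQ hQb (Or.inr qp)
  set W1 := (Ioi (0:ℝ)).indicator (fun t => sol.up (α t) t) with hW1
  set W2 := (Ioi (0:ℝ)).indicator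
    (fun t => if α t < 0 then fl (sol.up (α t) t) else fr (sol.up (α t) t)) with hW2
  have : IntegrableOn (fun t => W2 t - deriv α t * W1 t) (Ioo 0 T) := by
    refine Measure.integrableOn_of_bounded (M := M + K * M) (by simp) ?_ ?_
    · have := measurable_deriv α
      exact (m2.sub (this.mul m1)).aestronglyMeasurable
    · refine Eventually.of_forall fun t => (abs_sub _ _).trans (add_le_add (b2 t) ?_)
      rw [abs_mul]
      exact mul_le_mul (norm_deriv_le_of_lipschitz hα) (b1 t) (abs_nonneg _) (by positivity)
  refine this.congr_fun (fun t ht => ?_) measurableSet_Ioo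
  simp [hW1, hW2, ht.1]

/-- equality of the flux functionals holds iff `ζ` is a common
AB-genuine/interface characteristic of `u^*` and `u`
(second part of Lemma 4.8 of the paper). -/
theorem flux_functional_equality_iff
    {T a θl θr A B : ℝ} {fl fr : ℝ → ℝ}
    (hT : 0 < T)
    (hflC : ContDiff ℝ 2 fl) (hfrC : ContDiff ℝ 2 fr)
    (ha : 0 < a)
    (hfl2 : ∀ w : ℝ, a ≤ deriv (deriv fl) w)
    (hfr2 : ∀ w : ℝ, a ≤ deriv (deriv fr) w)
    (hf0 : fl 0 = fr 0) (hf1 : fl 1 = fr 1)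
    (hθl : deriv fl θl = 0) (hθr : deriv fr θr = 0)
    (hθl0 : 0 ≤ θl) (hθr1 : θr ≤ 1)
    (hAB : fl A = fr B) (hA' : deriv fl A ≤ 0) (hB' : 0 ≤ deriv fr B)
    {ua0 ub0 : ℝ → ℝ} (hua0 : IsLinf ua0) (hub0 : IsLinf ub0)
    (usol : ABSol fl fr A B ua0) (ustar : ABSol fl fr A B ub0)
    (x : ℝ) (ζ : ℝ → ℝ) (hζ : ζ ∈ charSet T fl fr (fl A) ustar x) :
    Fplus fl fr T usol 0 ζ = Fplus fl fr T ustar 0 ζ ↔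
      ζ ∈ charSet T fl fr (fl A) ustar x ∩ charSet T fl fr (fl A) usol x := by
  obtain ⟨⟨⟨K, hK⟩, hgic⟩, hx⟩ := hζ
  have hζ' : ζ ∈ charSet T fl fr (fl A) ustar x := ⟨⟨⟨K, hK⟩, hgic⟩, hx⟩
  have dl : Differentiable ℝ fl := hflC.differentiable two_ne_zero
  have dr : Differentiable ℝ fr := hfrC.differentiable two_ne_zero
  have ml : StrictMono (deriv fl) := strictMono_of_deriv_pos fun w => ha.trans_le (hfl2 w)
  have mr : StrictMono (deriv fr) := strictMono_of_deriv_pos fun w => ha.trans_le (hfr2 w)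
  obtain ⟨α, hα, hEq⟩ := hK.extend_real
  have hEqI : ∀ t ∈ Ioo 0 T, ζ t = α t := fun t ht => hEq (Ioo_subset_Icc_self ht)
  have hEv : ∀ t ∈ Ioo 0 T, ζ =ᶠ[nhds t] α := fun t ht => by
    filter_upwards [Ioo_mem_nhds ht.1 ht.2] with s hs using hEqI s hs
  have hrest : volume.restrict (Icc 0 T) = volume.restrict (Ioo 0 T) :=
    Measure.restrict_congr_set Ioo_ae_eq_Icc.symm
  have hF : ∀ {v0 : ℝ → ℝ} (sol : ABSol fl fr A B v0), Fplus fl fr T sol 0 ζ =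
      ∫ t in Ioo 0 T, ((if α t < 0 then fl (sol.up (α t) t) else fr (sol.up (α t) t)) -
        deriv α t * sol.up (α t) t) := by
    intro v0 sol
    unfold Fplus
    rw [intervalIntegral.integral_of_le hT.le, integral_Ioc_eq_integral_Ioo]
    refine setIntegral_congr_fun measurableSet_Ioo fun t ht => ?_
    simp only [hEqI t ht, (hEv t ht).deriv_eq]
  rw [hF, hF]
  have hz := ae_deriv_zero α
  rw [hrest, ae_restrict_iff' measurableSet_Ioo] at hgic
  constructor
  · intro heq
    refine ⟨hζ', ⟨⟨K, hK⟩, ?_⟩, hx⟩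
    rw [hrest]
    have hle : ∀ᵐ t ∂(volume.restrict (Ioo 0 T)), 0 ≤
        ((if α t < 0 then fl (usol.up (α t) t) else fr (usol.up (α t) t)) -
          deriv α t * usol.up (α t) t) -
        ((if α t < 0 then fl (ustar.up (α t) t) else fr (ustar.up (α t) t)) -
          deriv α t * ustar.up (α t) t) := by
      rw [ae_restrict_iff' measurableSet_Ioo]
      filter_upwards [hgic, hz, interface_ge dl dr ml mr hAB hA' hB' usol] with t h1 h2 h3 ht
      obtain ⟨g1, g2, g3⟩ := h1 ht
      rw [hEqI t ht] at g1 g2 g3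
      rcases lt_trichotomy (α t) 0 with h | h | h
      · obtain ⟨e1, e2⟩ := g1 h
        have hd := (e1.congr_of_eventuallyEq (hEv t ht).symm).deriv
        rw [if_pos h, if_pos h, hd, e2]
        have := tangent_le dl ml (usol.up (α t) t) (ustar.up (α t) t)
        linarith
      · rw [h2 h, h]
        simp only [lt_irrefl, if_false, zero_mul, sub_zero]
        linarith [h3 ht.1, (g3 h).2]
      · obtain ⟨e1, e2⟩ := g2 h
        have hd := (e1.congr_of_eventuallyEq (hEv t ht).symm).deriv
        rw [if_neg h.le.not_gt, if_neg h.le.not_gt, hd, e2]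
        have := tangent_le dr mr (usol.up (α t) t) (ustar.up (α t) t)
        linarith
    have i1 := flux_integrable dl.continuous dr.continuous usol hα T
    have i2 := flux_integrable dl.continuous dr.continuous ustar hα T
    have hzero := (integral_eq_zero_iff_of_nonneg_ae hle (i1.sub i2)).1 (by
      have := integral_sub i1 i2
      rw [heq, sub_self] at this
      exact this)
    rw [EventuallyEq, ae_restrict_iff' measurableSet_Ioo] at hzero
    rw [ae_restrict_iff' measurableSet_Ioo]
    filter_upwards [hgic, hz, hzero, rankine_hugoniot dl.continuous dr.continuous usol hα]
      with t h1 h2 h3 h4 ht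
    obtain ⟨g1, g2, g3⟩ := h1 ht
    have h3 := h3 ht
    have h4 := h4 ht.1
    simp only [Pi.zero_apply] at h3
    rw [hEqI t ht] at g1 g2 g3 ⊢
    refine ⟨fun h => ?_, fun h => ?_, fun h => ?_⟩
    · obtain ⟨e1, e2⟩ := g1 h
      have hd := (e1.congr_of_eventuallyEq (hEv t ht).symm).deriv
      rw [if_pos h, if_pos h, hd, e2] at h3
      have k1 : usol.up (α t) t = ustar.up (α t) t := by
        by_contra hne
        have := tangent_lt dl ml hne
        linarith
      rw [if_pos h, if_pos h.le, hd, e2, ← k1] at h4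
      have k2 : usol.um (α t) t = usol.up (α t) t := by
        by_contra hne
        have := tangent_lt dl ml hne
        linarith
      rw [k2, k1, ← e2]
      exact ⟨e1, rfl⟩
    · obtain ⟨e1, e2⟩ := g2 h
      have hd := (e1.congr_of_eventuallyEq (hEv t ht).symm).deriv
      rw [if_neg h.le.not_gt, if_neg h.le.not_gt, hd, e2] at h3
      have k1 : usol.up (α t) t = ustar.up (α t) t := by
        by_contra hne
        have := tangent_lt dr mr hne
        linarith
      rw [if_neg h.le.not_gt, if_neg h.not_ge, hd, e2, ← k1] at h4
      have k2 : usol.um (α t) t = usol.up (α t) t := by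
        by_contra hne
        have := tangent_lt dr mr hne
        linarith
      rw [k2, k1, ← e2]
      exact ⟨e1, rfl⟩
    · rw [h2 h, h] at h3 h4
      simp only [lt_irrefl, le_refl, if_true, if_false, zero_mul, sub_zero] at h3 h4
      have := (g3 h).2
      constructor <;> linarith
  · rintro ⟨-, ⟨-, hg⟩, -⟩
    rw [hrest, ae_restrict_iff' measurableSet_Ioo] at hg
    refine setIntegral_congr_ae measurableSet_Ioo ?_
    filter_upwards [hgic, hg, hz] with t h1 h1' h2 ht
    obtain ⟨g1, g2, g3⟩ := h1 ht
    obtain ⟨g1', g2', g3'⟩ := h1' ht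
    rw [hEqI t ht] at g1 g2 g3 g1' g2' g3'
    rcases lt_trichotomy (α t) 0 with h | h | h
    · obtain ⟨e1, e2⟩ := g1 h
      obtain ⟨e1', e2'⟩ := g1' h
      have : usol.up (α t) t = ustar.up (α t) t :=
        ml.injective (by rw [← e2, ← e2']; exact e1'.unique e1)
      rw [this]
    · rw [h2 h, h]
      simp only [lt_irrefl, if_false, zero_mul, sub_zero]
      rw [(g3 h).2, (g3' h).2]
    · obtain ⟨e1, e2⟩ := g2 h
      obtain ⟨e1', e2'⟩ := g2' h
      have : usol.up (α t) t = ustar.up (α t) t :=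
        mr.injective (by rw [← e2, ← e2']; exact e1'.unique e1)
      rw [this]
end
end

section
/- Let u be an AB-entropy solution of u_t + f(x,u)_x = 0 on ℝ × [0,∞), and let u_l(t) := u(0−,t), u_r(t) := u(0+,t) denote its one-sided traces at the interface x = 0. Then for almost every t > 0: f_l(u_l(t)) = f_r(u_r(t)) ≥ f_l(A) = f_r(B), and moreover if u_l(t) ≤ θ_l and u_r(t) ≥ θ_r then u_l(t) = A and u_r(t) = B. -/
open MeasureTheory Set Filter

noncomputable section

lemma aux_inner {χ : ℝ → ℝ} (hχ : ContDiff ℝ 1 χ) (hχc : HasCompactSupport χ) (hχ0 : χ 0 = 1)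
    {g : ℝ → ℝ} (hg : Measurable g) {M : ℝ} (hM : ∀ x, |g x| ≤ M) {gl gr : ℝ}
    (hl : Tendsto g (nhdsWithin 0 (Iio 0)) (nhds gl))
    (hr : Tendsto g (nhdsWithin 0 (Ioi 0)) (nhds gr)) :
    Tendsto (fun k : ℕ => ∫ y, g (y / ((k:ℝ) + 1)) * deriv χ y) atTop (nhds (gl - gr)) := by
  have hint : Integrable (deriv χ) :=
    (hχ.continuous_deriv le_rfl).integrable_of_hasCompactSupport hχc.deriv
  have hlim : (∫ y, (if y ≤ 0 then gl else gr) * deriv χ y) = gl - gr := by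
    have hI : Integrable (fun y : ℝ => (if y ≤ 0 then gl else gr) * deriv χ y) := by
      refine hint.bdd_mul (c := max |gl| |gr|) ?_ ?_
      · exact (Measurable.ite measurableSet_Iic measurable_const
          measurable_const).aestronglyMeasurable
      · refine Eventually.of_forall fun y => ?_
        rw [Real.norm_eq_abs]
        split_ifs <;> simp
    rw [← integral_add_compl (measurableSet_Iic (a := (0:ℝ))) hI, compl_Iic]
    have h1 : ∫ y in Iic (0:ℝ), (if y ≤ 0 then gl else gr) * deriv χ y = gl := by
      rw [setIntegral_congr_fun (g := fun y => gl * deriv χ y) measurableSet_Iic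
        (fun y hy => by simp only [mem_Iic] at hy; simp [hy])]
      rw [integral_const_mul, hχc.integral_Iic_deriv_eq hχ, hχ0, mul_one]
    have h2 : ∫ y in Ioi (0:ℝ), (if y ≤ 0 then gl else gr) * deriv χ y = -gr := by
      rw [setIntegral_congr_fun (g := fun y => gr * deriv χ y) measurableSet_Ioi
        (fun y hy => by simp only [mem_Ioi] at hy; simp [not_le.2 hy])]
      rw [integral_const_mul, hχc.integral_Ioi_deriv_eq hχ, hχ0]; ring
    rw [h1, h2]; ring
  rw [← hlim]
  refine tendsto_integral_of_dominated_convergence (fun y => M * |deriv χ y|) ?_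
    (hint.abs.const_mul M) ?_ ?_
  · intro k
    exact ((hg.comp (measurable_id.div_const _)).mul (measurable_deriv χ)).aestronglyMeasurable
  · intro k
    refine Eventually.of_forall fun y => ?_
    rw [Real.norm_eq_abs, abs_mul]
    exact mul_le_mul_of_nonneg_right (hM _) (abs_nonneg _)
  · have h0 : ∀ᵐ y : ℝ, y ≠ 0 := by
      simp [ae_iff]
    filter_upwards [h0] with y hy
    have hz : Tendsto (fun k : ℕ => y / ((k:ℝ) + 1)) atTop (nhds 0) := by
      have := (tendsto_one_div_add_atTop_nhds_zero_nat (𝕜 := ℝ)).const_mul y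
      simpa [div_eq_mul_inv] using this
    refine Tendsto.mul_const _ ?_
    rcases lt_or_gt_of_ne hy with h | h
    · simp only [h.le, if_true]
      refine hl.comp (tendsto_nhdsWithin_iff.2 ⟨hz, Eventually.of_forall fun k => ?_⟩)
      exact div_neg_of_neg_of_pos h (by positivity)
    · simp only [not_le.2 h, if_false]
      refine hr.comp (tendsto_nhdsWithin_iff.2 ⟨hz, Eventually.of_forall fun k => ?_⟩)
      exact div_pos h (by positivity)

lemma aux_test {η q : ℝ → ℝ → ℝ} {M : ℝ} {ql qr : ℝ → ℝ}
    (hη : Measurable (Function.uncurry η)) (hq : Measurable (Function.uncurry q))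
    (hηM : ∀ x t, |η x t| ≤ M) (hqM : ∀ x t, |q x t| ≤ M)
    (hl : ∀ t, 0 < t → Tendsto (fun y => q y t) (nhdsWithin 0 (Iio 0)) (nhds (ql t)))
    (hr : ∀ t, 0 < t → Tendsto (fun y => q y t) (nhdsWithin 0 (Ioi 0)) (nhds (qr t)))
    (H : ∀ φ : ℝ → ℝ → ℝ,
      ContDiff ℝ 1 (fun p : ℝ × ℝ => φ p.1 p.2) →
      HasCompactSupport (fun p : ℝ × ℝ => φ p.1 p.2) →
      (∀ x t, 0 ≤ φ x t) →
      (∀ x t, t ≤ 0 → φ x t = 0) →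
      0 ≤ ∫ p : ℝ × ℝ, (η p.1 p.2 * deriv (fun s => φ p.1 s) p.2 +
        q p.1 p.2 * deriv (fun y => φ y p.2) p.1))
    {ψ : ℝ → ℝ} (hψ : ContDiff ℝ 1 ψ) (hψc : HasCompactSupport ψ) (hψ0 : ∀ t, 0 ≤ ψ t)
    (hψz : ∀ t, t ≤ 0 → ψ t = 0) :
    0 ≤ ∫ t, ψ t * (ql t - qr t) := by
  let b : ContDiffBump (0:ℝ) := ⟨1, 2, one_pos, one_lt_two⟩
  obtain ⟨χ, hχ, hχc, hχ0, hχp⟩ : ∃ χ : ℝ → ℝ, ContDiff ℝ 1 χ ∧ HasCompactSupport χ ∧ χ 0 = 1 ∧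
      ∀ x, 0 ≤ χ x :=
    ⟨b, b.contDiff, b.hasCompactSupport,
      b.one_of_mem_closedBall (Metric.mem_closedBall_self b.rIn_pos.le), fun x => b.nonneg⟩
  have hχi : Integrable χ := hχ.continuous.integrable_of_hasCompactSupport hχc
  have hχ'i : Integrable (deriv χ) :=
    (hχ.continuous_deriv le_rfl).integrable_of_hasCompactSupport hχc.deriv
  have hψi : Integrable ψ := hψ.continuous.integrable_of_hasCompactSupport hψc
  have hψ'i : Integrable (deriv ψ) :=
    (hψ.continuous_deriv le_rfl).integrable_of_hasCompactSupport hψc.deriv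
  -- the rescaled inner integrals
  let K : ℕ → ℝ → ℝ := fun k t => ∫ y, η (y / ((k:ℝ) + 1)) t * χ y
  let L : ℕ → ℝ → ℝ := fun k t => ∫ y, q (y / ((k:ℝ) + 1)) t * deriv χ y
  have hKM : ∀ k t, |K k t| ≤ M * ∫ y, |χ y| := by
    intro k t
    rw [← integral_const_mul, ← Real.norm_eq_abs]
    refine norm_integral_le_of_norm_le (hχi.abs.const_mul M) (Eventually.of_forall fun y => ?_)
    rw [Real.norm_eq_abs, abs_mul]
    exact mul_le_mul_of_nonneg_right (hηM _ _) (abs_nonneg _)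
  have hLM : ∀ k t, |L k t| ≤ M * ∫ y, |deriv χ y| := by
    intro k t
    rw [← integral_const_mul, ← Real.norm_eq_abs]
    refine norm_integral_le_of_norm_le (hχ'i.abs.const_mul M) (Eventually.of_forall fun y => ?_)
    rw [Real.norm_eq_abs, abs_mul]
    exact mul_le_mul_of_nonneg_right (hqM _ _) (abs_nonneg _)
  have hsc : ∀ k : ℕ, Measurable (fun p : ℝ × ℝ => (p.2 / ((k:ℝ)+1), p.1)) := fun k => by fun_prop
  have hKm : ∀ k, Measurable (K k) := by
    intro k
    have : Measurable (fun p : ℝ × ℝ => η (p.2 / ((k:ℝ) + 1)) p.1 * χ p.2) :=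
      (hη.comp (hsc k)).mul (hχ.continuous.measurable.comp measurable_snd)
    exact (this.stronglyMeasurable.integral_prod_right (ν := volume)).measurable
  have hLm : ∀ k, Measurable (L k) := by
    intro k
    have : Measurable (fun p : ℝ × ℝ => q (p.2 / ((k:ℝ) + 1)) p.1 * deriv χ p.2) :=
      (hq.comp (hsc k)).mul ((measurable_deriv χ).comp measurable_snd)
    exact (this.stronglyMeasurable.integral_prod_right (ν := volume)).measurable
  have hpos : ∀ k : ℕ, 0 ≤ ∫ t, (((k:ℝ)+1)⁻¹ * K k t * deriv ψ t + L k t * ψ t) := by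
    intro k
    have hc : (0:ℝ) < (k:ℝ) + 1 := by positivity
    set c : ℝ := (k:ℝ) + 1 with hcdef
    have hD1 : ∀ x t : ℝ, deriv (fun s => χ (c * x) * ψ s) t = χ (c * x) * deriv ψ t := by
      intro x t
      exact deriv_const_mul _ ((hψ.differentiable one_ne_zero) t)
    have hD2 : ∀ x t : ℝ, deriv (fun y => χ (c * y) * ψ t) x = c * deriv χ (c * x) * ψ t := by
      intro x t
      have h1 : HasDerivAt (fun y => χ (c * y)) (deriv χ (c * x) * (c * 1)) x :=
        HasDerivAt.comp x ((hχ.differentiable one_ne_zero) (c * x)).hasDerivAt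
          ((hasDerivAt_id x).const_mul c)
      rw [(h1.mul_const (ψ t)).deriv]; ring
    have h := H (fun x t => χ (c * x) * ψ t)
      (by
        exact (hχ.comp (contDiff_const.mul contDiff_fst)).mul (hψ.comp contDiff_snd))
      (by
        have hχc' : HasCompactSupport (fun x => χ (c * x)) :=
          hχc.comp_homeomorph (Homeomorph.mulLeft₀ c hc.ne')
        refine HasCompactSupport.intro (hχc'.isCompact.prod hψc.isCompact) ?_
        rintro ⟨x, t⟩ hxt
        simp only [mem_prod, not_and_or] at hxt
        rcases hxt with h | h
        · have := image_eq_zero_of_notMem_tsupport h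
          simp [this]
        · simp [image_eq_zero_of_notMem_tsupport h])
      (fun x t => mul_nonneg (hχp _) (hψ0 _))
      (fun x t ht => by simp [hψz t ht])
    simp only [hD1, hD2] at h
    have hi1 : Integrable (fun p : ℝ × ℝ => η p.1 p.2 * (χ (c * p.1) * deriv ψ p.2))
        (volume.prod volume) := by
      refine Integrable.bdd_mul (c := M) ?_ hη.aestronglyMeasurable
        (Eventually.of_forall fun p => hηM _ _)
      exact (hχi.comp_mul_left' hc.ne').mul_prod hψ'i
    have hi2 : Integrable (fun p : ℝ × ℝ => q p.1 p.2 * (c * deriv χ (c * p.1) * ψ p.2))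
        (volume.prod volume) := by
      refine Integrable.bdd_mul (c := M) ?_ hq.aestronglyMeasurable
        (Eventually.of_forall fun p => hqM _ _)
      exact ((hχ'i.comp_mul_left' hc.ne').const_mul c).mul_prod hψi
    rw [Measure.volume_eq_prod, integral_add hi1 hi2, integral_prod_symm _ hi1,
      integral_prod_symm _ hi2, ← integral_add hi1.integral_prod_right hi2.integral_prod_right] at h
    refine h.trans_eq (integral_congr_ae (Eventually.of_forall fun t => ?_))
    have e1 : ∫ x, η x t * (χ (c * x) * deriv ψ t) = c⁻¹ * K k t * deriv ψ t := by
      have := Measure.integral_comp_mul_left (fun y => η (y / c) t * χ y) c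
      rw [abs_of_pos (inv_pos.2 hc), smul_eq_mul] at this
      simp only [K]
      rw [← this, ← integral_mul_const]
      refine integral_congr_ae (Eventually.of_forall fun x => ?_)
      simp only [mul_div_cancel_left₀ _ hc.ne']
      ring
    have e2 : ∫ x, q x t * (c * deriv χ (c * x) * ψ t) = L k t * ψ t := by
      have := Measure.integral_comp_mul_left (fun y => q (y / c) t * deriv χ y) c
      rw [abs_of_pos (inv_pos.2 hc), smul_eq_mul, eq_inv_mul_iff_mul_eq₀ hc.ne'] at this
      simp only [L]
      rw [← this, ← integral_const_mul, ← integral_mul_const]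
      refine integral_congr_ae (Eventually.of_forall fun x => ?_)
      simp only [mul_div_cancel_left₀ _ hc.ne']
      ring
    simp only [e1, e2]
  refine ge_of_tendsto' (f := fun k : ℕ =>
    ∫ t, (((k:ℝ)+1)⁻¹ * K k t * deriv ψ t + L k t * ψ t)) (x := atTop) ?_ hpos
  refine tendsto_integral_of_dominated_convergence
    (fun t => (M * ∫ y, |χ y|) * |deriv ψ t| + (M * ∫ y, |deriv χ y|) * |ψ t|) ?_
    ((hψ'i.abs.const_mul _).add (hψi.abs.const_mul _)) ?_ ?_
  · intro k
    exact ((((hKm k).const_mul _).mul (measurable_deriv ψ)).add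
      ((hLm k).mul hψ.continuous.measurable)).aestronglyMeasurable
  · intro k
    refine Eventually.of_forall fun t => ?_
    rw [Real.norm_eq_abs]
    refine (abs_add_le _ _).trans (add_le_add ?_ ?_)
    · rw [abs_mul, abs_mul]
      refine mul_le_mul_of_nonneg_right ?_ (abs_nonneg _)
      have hc1 : |((k:ℝ)+1)⁻¹| ≤ 1 := by
        rw [abs_of_pos (by positivity)]
        exact inv_le_one_of_one_le₀ (by linarith [(Nat.cast_nonneg k : (0:ℝ) ≤ k)])
      calc _ ≤ 1 * |K k t| := mul_le_mul_of_nonneg_right hc1 (abs_nonneg _)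
        _ ≤ _ := by rw [one_mul]; exact hKM k t
    · rw [abs_mul]
      exact mul_le_mul_of_nonneg_right (hLM k t) (abs_nonneg _)
  · refine Eventually.of_forall fun t => ?_
    have hz : Tendsto (fun k : ℕ => ((k:ℝ)+1)⁻¹) atTop (nhds 0) := by
      simpa using tendsto_one_div_add_atTop_nhds_zero_nat (𝕜 := ℝ)
    have h1 : Tendsto (fun k : ℕ => ((k:ℝ)+1)⁻¹ * K k t) atTop (nhds 0) := by
      refine squeeze_zero_norm (a := fun k : ℕ => ((k:ℝ)+1)⁻¹ * (M * ∫ y, |χ y|)) (fun k => ?_) ?_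
      · rw [Real.norm_eq_abs, abs_mul, abs_of_pos (by positivity : 0 < ((k:ℝ)+1)⁻¹)]
        exact mul_le_mul_of_nonneg_left (hKM k t) (by positivity)
      · simpa using hz.mul_const (M * ∫ y, |χ y|)
    have h2 : Tendsto (fun k : ℕ => L k t * ψ t) atTop (nhds (ψ t * (ql t - qr t))) := by
      rcases le_or_gt t 0 with ht | ht
      · simp [hψz t ht]
      · rw [mul_comm]
        exact (aux_inner hχ hχc hχ0 (hq.comp measurable_prodMk_right) (fun x => hqM x t)
          (hl t ht) (hr t ht)).mul_const _
    simpa using (h1.mul_const (deriv ψ t)).add h2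

lemma aux_ae {η q : ℝ → ℝ → ℝ} {M : ℝ} {ql qr : ℝ → ℝ}
    (hη : Measurable (Function.uncurry η)) (hq : Measurable (Function.uncurry q))
    (hηM : ∀ x t, |η x t| ≤ M) (hqM : ∀ x t, |q x t| ≤ M)
    (hl : ∀ t, 0 < t → Tendsto (fun y => q y t) (nhdsWithin 0 (Iio 0)) (nhds (ql t)))
    (hr : ∀ t, 0 < t → Tendsto (fun y => q y t) (nhdsWithin 0 (Ioi 0)) (nhds (qr t)))
    (H : ∀ φ : ℝ → ℝ → ℝ,
      ContDiff ℝ 1 (fun p : ℝ × ℝ => φ p.1 p.2) →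
      HasCompactSupport (fun p : ℝ × ℝ => φ p.1 p.2) →
      (∀ x t, 0 ≤ φ x t) →
      (∀ x t, t ≤ 0 → φ x t = 0) →
      0 ≤ ∫ p : ℝ × ℝ, (η p.1 p.2 * deriv (fun s => φ p.1 s) p.2 +
        q p.1 p.2 * deriv (fun y => φ y p.2) p.1)) :
    ∀ᵐ t ∂(volume.restrict (Ioi (0:ℝ))), qr t ≤ ql t := by
  let h : ℝ → ℝ := (Ioi (0:ℝ)).indicator (fun t => ql t - qr t)
  have hz : Tendsto (fun k : ℕ => ((k:ℝ)+1)⁻¹) atTop (nhds 0) := by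
    simpa using tendsto_one_div_add_atTop_nhds_zero_nat (𝕜 := ℝ)
  have hcl : ∀ t, 0 < t → Tendsto (fun k : ℕ => q (-((k:ℝ)+1)⁻¹) t) atTop (nhds (ql t)) := by
    intro t ht
    refine (hl t ht).comp (tendsto_nhdsWithin_iff.2 ⟨by simpa using hz.neg,
      Eventually.of_forall fun k => ?_⟩)
    simp only [mem_Iio, Left.neg_neg_iff]; positivity
  have hcr : ∀ t, 0 < t → Tendsto (fun k : ℕ => q (((k:ℝ)+1)⁻¹) t) atTop (nhds (qr t)) := by
    intro t ht
    refine (hr t ht).comp (tendsto_nhdsWithin_iff.2 ⟨hz,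
      Eventually.of_forall fun k => ?_⟩)
    simp only [mem_Ioi]; positivity
  have hm : Measurable h := by
    refine measurable_of_tendsto_metrizable (f := fun k : ℕ =>
      (Ioi (0:ℝ)).indicator (fun t => q (-((k:ℝ)+1)⁻¹) t - q (((k:ℝ)+1)⁻¹) t)) (fun k => ?_) ?_
    · exact Measurable.indicator ((hq.comp measurable_prodMk_left).sub
        (hq.comp measurable_prodMk_left)) measurableSet_Ioi
    · rw [tendsto_pi_nhds]
      intro t
      by_cases ht : t ∈ Ioi (0:ℝ)
      · simp only [h, indicator_of_mem ht]
        exact (hcl t ht).sub (hcr t ht)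
      · simp only [h, indicator_of_notMem ht]
        exact tendsto_const_nhds
  have hb : ∀ t, ‖h t‖ ≤ 2 * M := by
    intro t
    by_cases ht : t ∈ Ioi (0:ℝ)
    · simp only [h, indicator_of_mem ht]
      refine le_of_tendsto' ((hcl t ht).sub (hcr t ht)).norm fun k => ?_
      refine (norm_sub_le _ _).trans ?_
      have := hqM (-((k:ℝ)+1)⁻¹) t
      have := hqM (((k:ℝ)+1)⁻¹) t
      simp only [Real.norm_eq_abs]; linarith
    · simp only [h, indicator_of_notMem ht, norm_zero]
      linarith [(abs_nonneg _).trans (hqM 0 0)]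
  have hli : LocallyIntegrable h volume := by
    refine (locallyIntegrable_const (2 * M)).mono hm.aestronglyMeasurable
      (Eventually.of_forall fun t => (hb t).trans (le_abs_self _))
  let φ : ℕ → ContDiffBump (0:ℝ) := fun k =>
    ⟨((k:ℝ)+1)⁻¹, 2 * ((k:ℝ)+1)⁻¹, by positivity, by
      have : 0 < ((k:ℝ)+1)⁻¹ := by positivity
      linarith⟩
  have hφ : Tendsto (fun i ↦ (φ i).rOut) atTop (nhds 0) := by
    simpa [φ] using hz.const_mul 2
  have hae := ContDiffBump.ae_convolution_tendsto_right_of_locallyIntegrable (μ := volume)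
    (φ := φ) (K := 2) hφ (Eventually.of_forall fun k => le_rfl) hli
  rw [ae_restrict_iff' measurableSet_Ioi]
  filter_upwards [hae] with t ht htpos
  have htpos' : 0 < t := htpos
  have h0 : 0 ≤ h t := by
    refine ge_of_tendsto ht ?_
    filter_upwards [hφ.eventually (gt_mem_nhds htpos')] with k hk
    rw [convolution_eq_swap]
    simp only [ContinuousLinearMap.lsmul_apply, smul_eq_mul]
    have hz' : ∀ s, s ≤ 0 → (φ k).normed volume (t - s) = 0 := by
      intro s hs
      have : (t - s) ∉ Function.support ((φ k).normed volume) := by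
        rw [ContDiffBump.support_normed_eq, Metric.mem_ball, Real.dist_eq, sub_zero, not_lt,
          abs_of_pos (by linarith)]
        linarith
      simpa using this
    have := aux_test hη hq hηM hqM hl hr H (ψ := fun s => (φ k).normed volume (t - s))
      ((ContDiffBump.contDiff_normed (n := 1) (φ k)).comp (contDiff_const.sub contDiff_id))
      ((φ k).hasCompactSupport_normed.comp_homeomorph (Homeomorph.subLeft t))
      (fun s => (φ k).nonneg_normed _) hz'
    refine this.trans_eq (integral_congr_ae (Eventually.of_forall fun s => ?_))
    by_cases hs : s ∈ Ioi (0:ℝ)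
    · simp only [h, indicator_of_mem hs]
    · simp only [mem_Ioi, not_lt] at hs
      simp [hz' s hs]
  simp only [h, indicator_of_mem htpos] at h0
  linarith

lemma aux_bdd {g : ℝ → ℝ} (hg : Continuous g) (M : ℝ) : ∃ C, ∀ w, |w| ≤ M → |g w| ≤ C := by
  obtain ⟨C, hC⟩ := (isCompact_Icc (a := -M) (b := M)).exists_bound_of_continuousOn hg.continuousOn
  exact ⟨C, fun w hw => hC w (abs_le.1 hw)⟩

lemma aux_sign_eq {g : ℝ → ℝ} {k : ℝ} (w : ℝ) :
    Real.sign (w - k) * (g w - g k) = g (max w k) - g (min w k) := by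
  rcases lt_trichotomy w k with h | h | h
  · rw [Real.sign_of_neg (by linarith), max_eq_right h.le, min_eq_left h.le]; ring
  · subst h; simp
  · rw [Real.sign_of_pos (by linarith), max_eq_left h.le, min_eq_right h.le]; ring

lemma aux_sign_cont {g : ℝ → ℝ} (hg : Continuous g) (k : ℝ) :
    Continuous (fun w => Real.sign (w - k) * (g w - g k)) := by
  simp only [aux_sign_eq]
  fun_prop

lemma aux_piecewise {u : ℝ → ℝ → ℝ} {g1 g0 g2 : ℝ → ℝ} {q : ℝ → ℝ → ℝ}
    (hu : Measurable (Function.uncurry u)) (hub : ∃ M : ℝ, ∀ x t, |u x t| ≤ M)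
    (h1 : Continuous g1) (h0 : Measurable g0) (h0b : ∀ M, ∃ C, ∀ w, |w| ≤ M → |g0 w| ≤ C)
    (h2 : Continuous g2)
    (hq1 : ∀ x t, x < 0 → q x t = g1 (u x t)) (hq0 : ∀ t, q 0 t = g0 (u 0 t))
    (hq2 : ∀ x t, 0 < x → q x t = g2 (u x t)) {um up : ℝ → ℝ}
    (hum : ∀ t, 0 < t → Tendsto (fun y => u y t) (nhdsWithin 0 (Iio 0)) (nhds (um t)))
    (hup : ∀ t, 0 < t → Tendsto (fun y => u y t) (nhdsWithin 0 (Ioi 0)) (nhds (up t))) :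
    Measurable (Function.uncurry q) ∧ (∃ C, ∀ x t, |q x t| ≤ C) ∧
    (∀ t, 0 < t → Tendsto (fun y => q y t) (nhdsWithin 0 (Iio 0)) (nhds (g1 (um t)))) ∧
    (∀ t, 0 < t → Tendsto (fun y => q y t) (nhdsWithin 0 (Ioi 0)) (nhds (g2 (up t)))) := by
  refine ⟨?_, ?_, ?_, ?_⟩
  · have : Function.uncurry q = fun p : ℝ × ℝ => if p.1 < 0 then g1 (Function.uncurry u p) else
        if 0 < p.1 then g2 (Function.uncurry u p) else g0 (Function.uncurry u p) := by
      ext ⟨x, t⟩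
      rcases lt_trichotomy x 0 with h | h | h
      · simp [h, hq1]
      · subst h; simp [hq0]
      · simp [h, hq2, h.not_gt]
    rw [this]
    refine Measurable.ite (measurableSet_lt measurable_fst measurable_const)
      (h1.measurable.comp hu) (Measurable.ite (measurableSet_lt measurable_const measurable_fst)
      (h2.measurable.comp hu) (h0.comp hu))
  · obtain ⟨M, hM⟩ := hub
    obtain ⟨C1, hC1⟩ := aux_bdd h1 M
    obtain ⟨C2, hC2⟩ := aux_bdd h2 M
    obtain ⟨C0, hC0⟩ := h0b M
    refine ⟨max C1 (max C2 C0), fun x t => ?_⟩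
    rcases lt_trichotomy x 0 with h | h | h
    · rw [hq1 x t h]; exact (hC1 _ (hM _ _)).trans (le_max_left _ _)
    · subst h; rw [hq0]
      exact (hC0 _ (hM _ _)).trans ((le_max_right _ _).trans (le_max_right _ _))
    · rw [hq2 x t h]; exact (hC2 _ (hM _ _)).trans ((le_max_left _ _).trans (le_max_right _ _))
  · intro t ht
    refine ((h1.tendsto _).comp (hum t ht)).congr' ?_
    filter_upwards [self_mem_nhdsWithin] with y hy
    exact (hq1 y t hy).symm
  · intro t ht
    refine ((h2.tendsto _).comp (hup t ht)).congr' ?_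
    filter_upwards [self_mem_nhdsWithin] with y hy
    exact (hq2 y t hy).symm

lemma aux_sign_abs (x : ℝ) : |Real.sign x| ≤ 1 := by
  rcases Real.sign_apply_eq x with h | h | h <;> rw [h] <;> simp

lemma aux_mono {f : ℝ → ℝ} {a θ : ℝ} (hf : ContDiff ℝ 2 f) (ha : 0 < a)
    (h2 : ∀ w, a ≤ deriv (deriv f) w) (hθ : deriv f θ = 0) :
    StrictMono (deriv f) ∧ StrictAntiOn f (Iic θ) ∧ StrictMonoOn f (Ici θ) := by
  have hm : StrictMono (deriv f) := strictMono_of_deriv_pos fun x => ha.trans_le (h2 x)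
  refine ⟨hm, ?_, ?_⟩
  · refine strictAntiOn_of_deriv_neg (convex_Iic θ) hf.continuous.continuousOn fun x hx => ?_
    rw [interior_Iic] at hx
    rw [← hθ]; exact hm hx
  · refine strictMonoOn_of_deriv_pos (convex_Ici θ) hf.continuous.continuousOn fun x hx => ?_
    rw [interior_Ici] at hx
    rw [← hθ]; exact hm hx

/-- interface conditions satisfied by the traces of an
AB-entropy solution at `x = 0`, for a.e. `t > 0` (Remark 2.3 of the paper). -/
theorem interface_trace_conditions
    {a θl θr A B : ℝ} {fl fr : ℝ → ℝ}
    (hflC : ContDiff ℝ 2 fl) (hfrC : ContDiff ℝ 2 fr)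
    (ha : 0 < a)
    (hfl2 : ∀ w : ℝ, a ≤ deriv (deriv fl) w)
    (hfr2 : ∀ w : ℝ, a ≤ deriv (deriv fr) w)
    (hf0 : fl 0 = fr 0) (hf1 : fl 1 = fr 1)
    (hθl : deriv fl θl = 0) (hθr : deriv fr θr = 0)
    (hθl0 : 0 ≤ θl) (hθr1 : θr ≤ 1)
    (hAB : fl A = fr B) (hA' : deriv fl A ≤ 0) (hB' : 0 ≤ deriv fr B)
    {u0 : ℝ → ℝ} (hu0 : IsLinf u0) (sol : ABSol fl fr A B u0) :
    ∀ᵐ t ∂(volume.restrict (Ioi (0:ℝ))),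
      fl (sol.um 0 t) = fr (sol.up 0 t) ∧
      fl A ≤ fl (sol.um 0 t) ∧
      (sol.um 0 t ≤ θl → θr ≤ sol.up 0 t →
        sol.um 0 t = A ∧ sol.up 0 t = B) := by
  have hflc := hflC.continuous
  have hfrc := hfrC.continuous
  obtain ⟨hml, hal, hmonl⟩ := aux_mono hflC ha hfl2 hθl
  obtain ⟨hmr, har, hmonr⟩ := aux_mono hfrC ha hfr2 hθr
  have hAθ : A ≤ θl := hml.le_iff_le.1 (by rw [hθl]; exact hA')
  have hBθ : θr ≤ B := hmr.le_iff_le.1 (by rw [hθr]; exact hB')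
  have hum : ∀ t, 0 < t → Tendsto (fun y => sol.u y t) (nhdsWithin 0 (Iio 0))
    (nhds (sol.um 0 t)) := fun t => sol.um_spec 0 t
  have hup : ∀ t, 0 < t → Tendsto (fun y => sol.u y t) (nhdsWithin 0 (Ioi 0))
    (nhds (sol.up 0 t)) := fun t => sol.up_spec 0 t
  obtain ⟨M, hM⟩ := sol.bdd
  -- Rankine-Hugoniot
  obtain ⟨hqm, ⟨C, hC⟩, hql, hqr⟩ := aux_piecewise
    (q := fun x t => dflux fl fr x (sol.u x t)) (g1 := fl) (g0 := fr) (g2 := fr)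
    sol.meas sol.bdd hflc hfrc.measurable (fun M => aux_bdd hfrc M) hfrc
    (fun x t hx => by simp [dflux, hx]) (fun t => by simp [dflux])
    (fun x t hx => by simp [dflux, hx.not_gt]) hum hup
  have hRH1 := aux_ae (η := sol.u) (q := fun x t => dflux fl fr x (sol.u x t)) (M := max M C)
    sol.meas hqm (fun x t => (hM x t).trans (le_max_left _ _))
    (fun x t => (hC x t).trans (le_max_right _ _)) hql hqr
    (fun φ h1 h2 _ h4 => (sol.weak φ h1 h2 h4).ge)
  have hRH2 := aux_ae (η := fun x t => - sol.u x t)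
    (q := fun x t => - dflux fl fr x (sol.u x t)) (M := max M C)
    (ql := fun t => - fl (sol.um 0 t)) (qr := fun t => - fr (sol.up 0 t))
    sol.meas.neg hqm.neg (fun x t => by rw [abs_neg]; exact (hM x t).trans (le_max_left _ _))
    (fun x t => by rw [abs_neg]; exact (hC x t).trans (le_max_right _ _))
    (fun t ht => (hql t ht).neg) (fun t ht => (hqr t ht).neg)
    (fun φ h1 h2 _ h4 => by
      have := sol.weak φ h1 h2 h4
      rw [← neg_eq_zero, ← integral_neg] at this
      refine this.ge.trans_eq (integral_congr_ae (Eventually.of_forall fun p => ?_))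
      simp only; ring)
  -- interface entropy
  have hs0 : Measurable (fun w => Real.sign (w - A) * (fr w - fr A)) :=
    (aux_sign_cont hfrc A).measurable
  obtain ⟨hqm', ⟨C', hC'⟩, hql', hqr'⟩ := aux_piecewise
    (q := fun x t => Real.sign (sol.u x t - cAB A B x) *
      (dflux fl fr x (sol.u x t) - dflux fl fr x (cAB A B x)))
    (g1 := fun w => Real.sign (w - A) * (fl w - fl A))
    (g0 := fun w => Real.sign (w - A) * (fr w - fr A))
    (g2 := fun w => Real.sign (w - B) * (fr w - fr B))
    sol.meas sol.bdd (aux_sign_cont hflc A) hs0 (fun M => aux_bdd (aux_sign_cont hfrc A) M)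
    (aux_sign_cont hfrc B)
    (fun x t hx => by simp [dflux, cAB, hx, hx.le]) (fun t => by simp [dflux, cAB])
    (fun x t hx => by simp [dflux, cAB, hx.not_gt, hx.not_ge]) hum hup
  have hcm : Measurable (fun p : ℝ × ℝ => cAB A B p.1) :=
    Measurable.ite (measurableSet_le measurable_fst measurable_const)
      measurable_const measurable_const
  have hcb : ∀ x, |cAB A B x| ≤ max |A| |B| := by
    intro x; unfold cAB; split_ifs <;> simp
  have hE := aux_ae (η := fun x t => |sol.u x t - cAB A B x|)
    (q := fun x t => Real.sign (sol.u x t - cAB A B x) *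
      (dflux fl fr x (sol.u x t) - dflux fl fr x (cAB A B x)))
    (M := max (M + max |A| |B|) C')
    (sol.meas.sub hcm).abs hqm'
    (fun x t => by
      rw [abs_abs]
      exact ((abs_sub _ _).trans (add_le_add (hM x t) (hcb x))).trans (le_max_left _ _))
    (fun x t => (hC' x t).trans (le_max_right _ _)) hql' hqr' sol.interfaceEntropy
  filter_upwards [hRH1, hRH2, hE] with t h1 h2 h3
  have hRH : fl (sol.um 0 t) = fr (sol.up 0 t) := by linarith
  generalize sol.um 0 t = p at *
  generalize sol.up 0 t = r at *
  have hge : fl A ≤ fl p := by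
    by_contra hlt
    rw [not_le] at hlt
    have hp : A < p := by
      by_contra hp
      rw [not_lt] at hp
      exact absurd (hal.antitoneOn (hp.trans hAθ) hAθ hp) (not_le.2 hlt)
    have hr : r < B := by
      by_contra hr
      rw [not_lt] at hr
      have := hmonr.monotoneOn hBθ (hBθ.trans hr) hr
      linarith
    rw [Real.sign_of_neg (sub_neg.2 hr), Real.sign_of_pos (sub_pos.2 hp)] at h3
    linarith
  refine ⟨hRH, hge, fun hp hr => ?_⟩
  have hpA : p ≤ A := (hal.le_iff_ge hAθ hp).1 hge
  have hrB : B ≤ r := (hmonr.le_iff_le hBθ hr).1 (by linarith)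
  rcases hge.eq_or_lt with he | hlt
  · exact ⟨hal.injOn hp hAθ he.symm, hmonr.injOn hr hBθ (by linarith)⟩
  · exfalso
    have hpA' : p < A := (hal.lt_iff_gt hAθ hp).1 hlt
    have hrB' : B < r := (hmonr.lt_iff_lt hBθ hr).1 (by linarith)
    rw [Real.sign_of_neg (sub_neg.2 hpA'), Real.sign_of_pos (sub_pos.2 hrB')] at h3
    linarith
end
end
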